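/- arXiv:2203.01756 — 3 statements merged into one kernel-verified Lean document; each statement's English description precedes it below -/
import Mathlib

section
/- The space X is complete for the norm ‖·‖_X: for every sequence (u_n) of functions in X such that for all ε > 0 there is M with ‖u_n − u_m‖_X < ε for all n, m ≥ M, there exists u ∈ X with ‖u_n − u‖_X → 0 as n → ∞ (and, along a subsequence, u_n → u almost everywhere in ℝ^N). -/
open MeasureTheory Set Filter
open scoped ENNReal

noncomputable section

abbrev Eucl (N : ℕ) := EuclideanSpace ℝ (Fin N)

variable {N : ℕ}

/-- `Q = ℝ^{2N} \ (CΩ)^2`. -/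
def Qset (Ω : Set (Eucl N)) : Set (Eucl N × Eucl N) := (Ωᶜ ×ˢ Ωᶜ)ᶜ

/-- `φ_{x,y}(t) = a(x,y,|t|) t` for `t ≠ 0`, `φ_{x,y}(0) = 0`. -/
def phiF (a : Eucl N → Eucl N → ℝ → ℝ) (x y : Eucl N) (t : ℝ) : ℝ :=
  if t = 0 then 0 else a x y |t| * t

/-- `Φ_{x,y}(t) = ∫₀ᵗ φ_{x,y}(τ) dτ`. -/
def PhiF (a : Eucl N → Eucl N → ℝ → ℝ) (x y : Eucl N) (t : ℝ) : ℝ :=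
  ∫ τ in (0:ℝ)..t, phiF a x y τ

/-- Gagliardo-type modular on `Q` at scale `lam`. -/
def modQ (a : Eucl N → Eucl N → ℝ → ℝ) (s : ℝ) (Ω : Set (Eucl N))
    (u : Eucl N → ℝ) (lam : ℝ) : ℝ≥0∞ :=
  ∫⁻ p in Qset Ω, ENNReal.ofReal
    (PhiF a p.1 p.2 (|u p.1 - u p.2| / (lam * dist p.1 p.2 ^ s)) / dist p.1 p.2 ^ (N : ℝ))

/-- Gagliardo-type modular on `Ω × Ω` at scale `lam`. -/
def modOO (a : Eucl N → Eucl N → ℝ → ℝ) (s : ℝ) (Ω : Set (Eucl N))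
    (u : Eucl N → ℝ) (lam : ℝ) : ℝ≥0∞ :=
  ∫⁻ p in Ω ×ˢ Ω, ENNReal.ofReal
    (PhiF a p.1 p.2 (|u p.1 - u p.2| / (lam * dist p.1 p.2 ^ s)) / dist p.1 p.2 ^ (N : ℝ))

/-- modular `∫_Ω Φ̂_x(|u|/λ)`. -/
def modO (a : Eucl N → Eucl N → ℝ → ℝ) (Ω : Set (Eucl N))
    (u : Eucl N → ℝ) (lam : ℝ) : ℝ≥0∞ :=
  ∫⁻ x in Ω, ENNReal.ofReal (PhiF a x x (|u x| / lam))

/-- modular `∫_{CΩ} β Φ̂_x(|u|/λ)`. -/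
def modB (a : Eucl N → Eucl N → ℝ → ℝ) (Ω : Set (Eucl N)) (β : Eucl N → ℝ)
    (u : Eucl N → ℝ) (lam : ℝ) : ℝ≥0∞ :=
  ∫⁻ x in Ωᶜ, ENNReal.ofReal (β x * PhiF a x x (|u x| / lam))

/-- Luxemburg infimum of a modular family (`∞` if no admissible `λ`). -/
def lux (m : ℝ → ℝ≥0∞) : ℝ≥0∞ :=
  sInf {l : ℝ≥0∞ | ∃ lam : ℝ, 0 < lam ∧ l = ENNReal.ofReal lam ∧ m lam ≤ 1}

/-- `‖u‖_X = [u]_{s,Φ,Q} + ‖u‖_{Φ̂} + ‖u‖_{Φ̂,β,CΩ}`. -/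
def normX (a : Eucl N → Eucl N → ℝ → ℝ) (s : ℝ) (Ω : Set (Eucl N)) (β : Eucl N → ℝ)
    (u : Eucl N → ℝ) : ℝ≥0∞ :=
  lux (modQ a s Ω u) + lux (modO a Ω u) + lux (modB a Ω β u)

/-- the modular `ρ_s`. -/
def rhoS (a : Eucl N → Eucl N → ℝ → ℝ) (s : ℝ) (Ω : Set (Eucl N)) (β : Eucl N → ℝ)
    (u : Eucl N → ℝ) : ℝ≥0∞ :=
  modQ a s Ω u 1 + modO a Ω u 1 + modB a Ω β u 1

/-- the modular norm `‖u‖ = inf {λ > 0 : ρ_s(u/λ) ≤ 1}`. -/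
def normM (a : Eucl N → Eucl N → ℝ → ℝ) (s : ℝ) (Ω : Set (Eucl N)) (β : Eucl N → ℝ)
    (u : Eucl N → ℝ) : ℝ≥0∞ :=
  sInf {l : ℝ≥0∞ | ∃ lam : ℝ, 0 < lam ∧ l = ENNReal.ofReal lam ∧
    rhoS a s Ω β (fun x => u x / lam) ≤ 1}

/-- `X` described via the norm `‖·‖_X`. -/
def XsetX (a : Eucl N → Eucl N → ℝ → ℝ) (s : ℝ) (Ω : Set (Eucl N)) (β : Eucl N → ℝ) :
    Set (Eucl N → ℝ) :=
  {u | Measurable u ∧ normX a s Ω β u < ⊤}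

/-- `X` described via the modular norm `‖·‖`. -/
def XsetM (a : Eucl N → Eucl N → ℝ → ℝ) (s : ℝ) (Ω : Set (Eucl N)) (β : Eucl N → ℝ) :
    Set (Eucl N → ℝ) :=
  {u | Measurable u ∧ (∃ lam : ℝ, 0 < lam ∧ rhoS a s Ω β (fun x => u x / lam) < ⊤) ∧
    normM a s Ω β u < ⊤}

/-- the fractional difference quotient `D^s u`. -/
def Du (s : ℝ) (u : Eucl N → ℝ) (p : Eucl N × Eucl N) : ℝ :=
  (u p.1 - u p.2) / dist p.1 p.2 ^ s

/-- `a(x,y,|D^s u|) D^s u`, with the convention that it vanishes when `u x = u y`. -/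
def Ku (a : Eucl N → Eucl N → ℝ → ℝ) (s : ℝ) (u : Eucl N → ℝ) (p : Eucl N × Eucl N) : ℝ :=
  if u p.1 = u p.2 then 0 else a p.1 p.2 |Du s u p| * Du s u p

/-- the form `A_s(u,v)`. -/
def Aform (a : Eucl N → Eucl N → ℝ → ℝ) (s : ℝ) (Ω : Set (Eucl N)) (β : Eucl N → ℝ)
    (u v : Eucl N → ℝ) : ℝ :=
  (1/2) * (∫ p in Qset Ω, Ku a s u p * Du s v p / dist p.1 p.2 ^ (N : ℝ))
  + (∫ x in Ω, a x x |u x| * u x * v x)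
  + ∫ x in Ωᶜ, β x * (a x x |u x| * u x * v x)

/-- the nonlocal normal derivative `𝒩^s_a u` on `CΩ`. -/
def Nop (a : Eucl N → Eucl N → ℝ → ℝ) (s : ℝ) (Ω : Set (Eucl N)) (u : Eucl N → ℝ)
    (x : Eucl N) : ℝ :=
  ∫ y in Ω, Ku a s u (x, y) / dist x y ^ ((N : ℝ) + s)

/-- `F(x,t) = ∫₀ᵗ f(x,τ) dτ`. -/
def Ff (f : Eucl N → ℝ → ℝ) (x : Eucl N) (t : ℝ) : ℝ := ∫ τ in (0:ℝ)..t, f x τ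

/-- the energy functional `J_λ`. -/
def Jlam (a : Eucl N → Eucl N → ℝ → ℝ) (s : ℝ) (Ω : Set (Eucl N)) (β : Eucl N → ℝ)
    (f : Eucl N → ℝ → ℝ) (lam : ℝ) (u : Eucl N → ℝ) : ℝ :=
  (1/2) * (modQ a s Ω u 1).toReal + (modO a Ω u 1).toReal + (modB a Ω β u 1).toReal
    - lam * ∫ x in Ω, Ff f x (u x)

/-- the variable-exponent Luxemburg norm `‖u‖_{q(·)}` on `Ω`. -/
def normq (Ω : Set (Eucl N)) (q : Eucl N → ℝ) (u : Eucl N → ℝ) : ℝ≥0∞ :=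
  sInf {l : ℝ≥0∞ | ∃ lam : ℝ, 0 < lam ∧ l = ENNReal.ofReal lam ∧
    (∫⁻ x in Ω, ENNReal.ofReal (|u x / lam| ^ q x)) ≤ 1}

section Abstract
variable {α : Type*} [MeasurableSpace α]

structure GoodPsi (Ψ : α → ℝ → ℝ) : Prop where
  meas : Measurable (fun q : α × ℝ => Ψ q.1 q.2)
  cont : ∀ p, Continuous (Ψ p)
  nonneg : ∀ p t, 0 ≤ t → 0 ≤ Ψ p t
  mono : ∀ p t t', 0 ≤ t → t ≤ t' → Ψ p t ≤ Ψ p t'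
  sub : ∀ p c t, 0 ≤ c → c ≤ 1 → 0 ≤ t → Ψ p (c * t) ≤ c * Ψ p t
  pos : ∀ p, 0 < Ψ p 1

def gmod (μ : Measure α) (w : α → ℝ≥0∞) (Ψ : α → ℝ → ℝ) (v : α → ℝ) (lam : ℝ) : ℝ≥0∞ :=
  ∫⁻ p, w p * ENNReal.ofReal (Ψ p (|v p| / lam)) ∂μ

variable {μ : Measure α} {w : α → ℝ≥0∞} {Ψ : α → ℝ → ℝ}

lemma GoodPsi.meas_int (h : GoodPsi Ψ) (hw : Measurable w) {v : α → ℝ} (hv : Measurable v)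
    (lam : ℝ) : Measurable fun p => w p * ENNReal.ofReal (Ψ p (|v p| / lam)) := by
  have hm : Measurable fun p => (p, |v p| / lam) := by
    have : Measurable fun p => |v p| := hv.abs
    fun_prop
  exact hw.mul (h.meas.comp hm).ennreal_ofReal

lemma GoodPsi.gmod_anti (h : GoodPsi Ψ) (v : α → ℝ) {l l' : ℝ} (hl : 0 < l) (hll : l ≤ l') :
    gmod μ w Ψ v l' ≤ gmod μ w Ψ v l := by
  unfold gmod
  refine lintegral_mono fun p => ?_
  have h1 : |v p| / l' ≤ |v p| / l := by gcongr
  have h2 : 0 ≤ |v p| / l' := div_nonneg (abs_nonneg _) (hl.le.trans hll)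
  have := h.mono p _ _ h2 h1
  dsimp only
  gcongr

lemma GoodPsi.gmod_le_one (h : GoodPsi Ψ) (v : α → ℝ) {ε : ℝ}
    (hl : lux (gmod μ w Ψ v) < ENNReal.ofReal ε) : gmod μ w Ψ v ε ≤ 1 := by
  unfold lux at hl
  obtain ⟨l, ⟨lam, h0, rfl, h1⟩, h2⟩ := sInf_lt_iff.1 hl
  have : lam < ε := (ENNReal.ofReal_lt_ofReal_iff_of_nonneg h0.le).1 h2
  exact (h.gmod_anti v h0 this.le).trans h1

lemma lux_le {m : ℝ → ℝ≥0∞} {ε : ℝ} (hε : 0 < ε) (h : m ε ≤ 1) : lux m ≤ ENNReal.ofReal ε :=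
  sInf_le ⟨ε, hε, rfl, h⟩

lemma exists_of_lux_lt_top {m : ℝ → ℝ≥0∞} (h : lux m < ⊤) : ∃ l, 0 < l ∧ m l ≤ 1 := by
  unfold lux at h
  obtain ⟨l, ⟨lam, h0, rfl, h1⟩, h2⟩ := sInf_lt_iff.1 h
  exact ⟨lam, h0, h1⟩

lemma GoodPsi.lux_add (h : GoodPsi Ψ) (hw : Measurable w) {v v' : α → ℝ} (hv : Measurable v)
    (h1 : lux (gmod μ w Ψ v) < ⊤) (h2 : lux (gmod μ w Ψ (fun p => v p - v' p)) < ⊤) :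
    lux (gmod μ w Ψ v') < ⊤ := by
  obtain ⟨l1, hl1, h1⟩ := exists_of_lux_lt_top h1
  obtain ⟨l2, hl2, h2⟩ := exists_of_lux_lt_top h2
  set L := max l1 l2 with hL
  have hLpos : 0 < L := lt_max_of_lt_left hl1
  have h1' := (h.gmod_anti (μ := μ) (w := w) v hl1 (le_max_left l1 l2)).trans h1
  have h2' := (h.gmod_anti (μ := μ) (w := w) (fun p => v p - v' p) hl2
    (le_max_right l1 l2)).trans h2
  rw [← hL] at h1' h2'
  refine (lux_le (ε := 4 * L) (by positivity) ?_).trans_lt ENNReal.ofReal_lt_top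
  have key : gmod μ w Ψ v' (4 * L) ≤
      ∫⁻ p, 2⁻¹ * (w p * ENNReal.ofReal (Ψ p (|v p| / L)) +
        w p * ENNReal.ofReal (Ψ p (|v p - v' p| / L))) ∂μ := by
    unfold gmod
    refine lintegral_mono fun p => ?_
    dsimp only
    have e1 : Ψ p (|v' p| / (4 * L)) ≤
        2⁻¹ * (Ψ p (|v p| / L) + Ψ p (|v p - v' p| / L)) := by
      have t0 : |v' p| / (4 * L) = 2⁻¹ * (|v' p| / (2 * L)) := by field_simp; norm_num
      rw [t0]
      refine (h.sub p _ _ (by norm_num) (by norm_num) (by positivity)).trans ?_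
      have n1 := h.nonneg p (|v p| / L) (by positivity)
      have n2 := h.nonneg p (|v p - v' p| / L) (by positivity)
      have t1 : |v' p| ≤ |v p| + |v p - v' p| := by
        have := abs_sub (v p) (v p - v' p)
        simpa using this
      have t2 : Ψ p (|v' p| / (2 * L)) ≤ Ψ p (|v p| / L) + Ψ p (|v p - v' p| / L) := by
        rcases le_total (|v p|) (|v p - v' p|) with hc | hc
        · refine (h.mono p _ (|v p - v' p| / L) (by positivity) ?_).trans (by linarith)
          rw [div_le_div_iff₀ (by positivity) hLpos]
          nlinarith
        · refine (h.mono p _ (|v p| / L) (by positivity) ?_).trans (by linarith)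
          rw [div_le_div_iff₀ (by positivity) hLpos]
          nlinarith
      linarith
    have n1 := h.nonneg p (|v p| / L) (by positivity)
    have n2 := h.nonneg p (|v p - v' p| / L) (by positivity)
    calc _ ≤ w p * ENNReal.ofReal (2⁻¹ * (Ψ p (|v p| / L) + Ψ p (|v p - v' p| / L))) := by
          gcongr
      _ = _ := by
          rw [ENNReal.ofReal_mul (by norm_num), ENNReal.ofReal_add n1 n2,
            ENNReal.ofReal_inv_of_pos (by norm_num)]
          simp only [ENNReal.ofReal_ofNat]
          ring
  refine key.trans ?_
  rw [lintegral_const_mul' _ _ (by simp), lintegral_add_left (h.meas_int hw hv L)]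
  calc 2⁻¹ * _ ≤ (2⁻¹ : ℝ≥0∞) * (1 + 1) := by
        gcongr
        · exact h1'
        · exact h2'
    _ = 1 := by
        rw [one_add_one_eq_two]
        exact ENNReal.inv_mul_cancel (by simp) (by simp)

lemma GoodPsi.fatou (h : GoodPsi Ψ) (hw : Measurable w) {v : ℕ → α → ℝ} {v' : α → ℝ}
    (hv : ∀ n, Measurable (v n)) {ε : ℝ}
    (hb : ∀ᶠ k in atTop, gmod μ w Ψ (v k) ε ≤ 1)
    (hlim : ∀ᵐ p ∂μ, Tendsto (fun k => v k p) atTop (nhds (v' p)))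
    (hwtop : ∀ᵐ p ∂μ, w p ≠ ⊤) :
    gmod μ w Ψ v' ε ≤ 1 := by
  have h1 : gmod μ w Ψ v' ε ≤
      ∫⁻ p, liminf (fun k => w p * ENNReal.ofReal (Ψ p (|v k p| / ε))) atTop ∂μ := by
    unfold gmod
    refine lintegral_mono_ae ?_
    filter_upwards [hlim, hwtop] with p hp hwp
    have : Tendsto (fun k => w p * ENNReal.ofReal (Ψ p (|v k p| / ε))) atTop
        (nhds (w p * ENNReal.ofReal (Ψ p (|v' p| / ε)))) := by
      refine ENNReal.Tendsto.const_mul ?_ (Or.inr hwp)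
      refine ENNReal.tendsto_ofReal ?_
      exact ((h.cont p).tendsto _).comp (hp.abs.div_const ε)
    exact this.liminf_eq.ge
  refine h1.trans ((lintegral_liminf_le fun k => h.meas_int hw (hv k) ε).trans ?_)
  refine (liminf_le_liminf hb).trans ?_
  simp

lemma GoodPsi.conv (h : GoodPsi Ψ) (hw : Measurable w) {v : ℕ → α → ℝ}
    (hv : ∀ n, Measurable (v n))
    (hb : ∀ k, gmod μ w Ψ (fun p => v (k + 1) p - v k p) ((1 / 4) ^ k) ≤ 1) :
    ∀ᵐ p ∂μ, w p ≠ 0 → ∃ l, Tendsto (fun k => v k p) atTop (nhds l) := by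
  have hm : ∀ k, Measurable fun p =>
      w p * ENNReal.ofReal (Ψ p (|v (k + 1) p - v k p| / ((1 / 2) ^ k))) :=
    fun k => h.meas_int hw ((hv (k + 1)).sub (hv k)) _
  have h1 : ∀ k, ∫⁻ p, w p * ENNReal.ofReal (Ψ p (|v (k + 1) p - v k p| / ((1 / 2) ^ k))) ∂μ
      ≤ 2⁻¹ ^ k := by
    intro k
    have e : ∀ p, w p * ENNReal.ofReal (Ψ p (|v (k + 1) p - v k p| / ((1 / 2) ^ k))) ≤
        2⁻¹ ^ k * (w p * ENNReal.ofReal (Ψ p (|v (k + 1) p - v k p| / ((1 / 4) ^ k)))) := by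
      intro p
      have t0 : |v (k + 1) p - v k p| / ((1 / 2) ^ k) =
          (2⁻¹) ^ k * (|v (k + 1) p - v k p| / ((1 / 4) ^ k)) := by
        have : ((1:ℝ) / 4) ^ k = (1 / 2) ^ k * (1 / 2) ^ k := by
          rw [← mul_pow]; norm_num
        rw [this]
        field_simp
      rw [t0]
      have := h.sub p (2⁻¹ ^ k) (|v (k + 1) p - v k p| / ((1 / 4) ^ k)) (by positivity)
        (pow_le_one₀ (by norm_num) (by norm_num)) (by positivity)
      calc _ ≤ w p * ENNReal.ofReal (2⁻¹ ^ k * Ψ p (|v (k + 1) p - v k p| / ((1 / 4) ^ k))) := by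
            gcongr
        _ = _ := by
            rw [ENNReal.ofReal_mul (by positivity), ENNReal.ofReal_pow (by norm_num),
              ENNReal.ofReal_inv_of_pos (by norm_num)]
            simp only [ENNReal.ofReal_ofNat]
            ring
    refine (lintegral_mono e).trans ?_
    rw [lintegral_const_mul' _ _ (by simp)]
    calc _ ≤ (2⁻¹ : ℝ≥0∞) ^ k * 1 := by
          gcongr
          exact hb k
      _ = _ := mul_one _
  have h2 : ∫⁻ p, ∑' k, w p * ENNReal.ofReal (Ψ p (|v (k + 1) p - v k p| / ((1 / 2) ^ k))) ∂μ
      ≠ ⊤ := by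
    rw [lintegral_tsum fun k => (hm k).aemeasurable]
    refine ((ENNReal.tsum_le_tsum h1).trans_lt ?_).ne
    rw [ENNReal.tsum_geometric, ENNReal.one_sub_inv_two, inv_inv]
    simp
  filter_upwards [ae_lt_top (Measurable.ennreal_tsum hm) h2] with p hp hwp
  have h3 := ENNReal.tendsto_atTop_zero_of_tsum_ne_top hp.ne
  have hpos : 0 < w p * ENNReal.ofReal (Ψ p 1) :=
    ENNReal.mul_pos hwp (ENNReal.ofReal_pos.2 (h.pos p)).ne'
  obtain ⟨K, hK⟩ := eventually_atTop.1 (h3.eventually (gt_mem_nhds hpos))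
  have h4 : ∀ k ≥ K, |v (k + 1) p - v k p| ≤ (1 / 2) ^ k := by
    intro k hk
    by_contra hcon
    push Not at hcon
    have h5 : 1 ≤ |v (k + 1) p - v k p| / ((1 / 2) ^ k) := by
      rw [le_div_iff₀ (by positivity)]; linarith
    have h6 := h.mono p _ _ zero_le_one h5
    have h7 := hK k hk
    refine absurd h7 (not_lt.2 ?_)
    gcongr
  have h8 : CauchySeq fun k => v (k + K) p := by
    refine cauchySeq_of_le_geometric (1 / 2) ((1 / 2) ^ K) (by norm_num) fun n => ?_
    have := h4 (n + K) (by omega)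
    rw [dist_comm, Real.dist_eq]
    have e : n + 1 + K = n + K + 1 := by omega
    rw [e, ← pow_add, add_comm K n]
    exact this
  obtain ⟨l, hl⟩ := cauchySeq_tendsto_of_complete h8
  exact ⟨l, (tendsto_add_atTop_iff_nat K).1 hl⟩

lemma GoodPsi.comp {γ : Type*} [MeasurableSpace γ] (h : GoodPsi Ψ) {g : γ → α}
    (hg : Measurable g) : GoodPsi (fun x => Ψ (g x)) where
  meas := h.meas.comp ((hg.comp measurable_fst).prodMk measurable_snd)
  cont p := h.cont _
  nonneg p := h.nonneg _
  mono p := h.mono _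
  sub p := h.sub _
  pos p := h.pos _

end Abstract

lemma goodPsi_PhiF (a : Eucl N → Eucl N → ℝ → ℝ)
    (ha : Measurable fun p : Eucl N × Eucl N × ℝ => a p.1 p.2.1 p.2.2)
    (hmono : ∀ x y, StrictMono (phiF a x y))
    (hcont : ∀ x y, Continuous (phiF a x y)) :
    GoodPsi (fun (p : Eucl N × Eucl N) t => PhiF a p.1 p.2 t) := by
  have h0 : ∀ x y, phiF a x y 0 = 0 := fun x y => by simp [phiF]
  have hint : ∀ x y b c, IntervalIntegrable (phiF a x y) volume b c :=
    fun x y b c => (hcont x y).intervalIntegrable b c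
  have hnn : ∀ x y t, 0 ≤ t → 0 ≤ phiF a x y t := fun x y t ht => by
    rw [← h0 x y]; exact (hmono x y).monotone ht
  have hscale : ∀ x y c t, PhiF a x y (c * t) = c * ∫ τ in (0:ℝ)..t, phiF a x y (c * τ) := by
    intro x y c t
    have := intervalIntegral.mul_integral_comp_mul_left (a := 0) (b := t) (f := phiF a x y) (c := c)
    rw [this, mul_zero]; rfl
  constructor
  · have e : (fun q : (Eucl N × Eucl N) × ℝ => PhiF a q.1.1 q.1.2 q.2) = fun q =>
        q.2 * ∫ τ in Ioc (0:ℝ) 1, phiF a q.1.1 q.1.2 (q.2 * τ) := by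
      funext q
      have := hscale q.1.1 q.1.2 q.2 1
      rw [mul_one] at this
      rw [this, intervalIntegral.integral_of_le zero_le_one]
    change Measurable (fun q : (Eucl N × Eucl N) × ℝ => PhiF a q.1.1 q.1.2 q.2)
    rw [e]
    refine measurable_snd.mul ?_
    have hφ : Measurable fun z : ((Eucl N × Eucl N) × ℝ) × ℝ =>
        phiF a z.1.1.1 z.1.1.2 (z.1.2 * z.2) := by
      unfold phiF
      have hm : Measurable fun z : ((Eucl N × Eucl N) × ℝ) × ℝ => z.1.2 * z.2 := by fun_prop
      refine Measurable.ite (hm (measurableSet_singleton 0)) measurable_const ?_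
      refine Measurable.mul ?_ hm
      have hg : Measurable fun z : ((Eucl N × Eucl N) × ℝ) × ℝ =>
          (z.1.1.1, z.1.1.2, |z.1.2 * z.2|) := by
        have := hm.abs
        fun_prop
      exact ha.comp hg
    exact (hφ.stronglyMeasurable.integral_prod_right'
      (ν := volume.restrict (Ioc (0:ℝ) 1))).measurable
  · intro p
    exact intervalIntegral.continuous_primitive (fun b c => hint p.1 p.2 b c) 0
  · intro p t ht
    exact intervalIntegral.integral_nonneg ht fun u hu => hnn _ _ _ hu.1
  · intro p t t' ht htt
    have := intervalIntegral.integral_add_adjacent_intervals (hint p.1 p.2 0 t) (hint p.1 p.2 t t')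
    have h2 : 0 ≤ ∫ τ in t..t', phiF a p.1 p.2 τ :=
      intervalIntegral.integral_nonneg htt fun u hu => hnn _ _ _ (ht.trans hu.1)
    dsimp only [PhiF]
    linarith
  · intro p c t hc hc1 ht
    rw [hscale]
    refine mul_le_mul_of_nonneg_left ?_ hc
    refine intervalIntegral.integral_mono_on ht ?_ (hint _ _ _ _) fun u hu => ?_
    · exact ((hcont p.1 p.2).comp (continuous_const.mul continuous_id)).intervalIntegrable _ _
    · exact (hmono _ _).monotone (mul_le_of_le_one_left hu.1 hc1)
  · intro p
    refine intervalIntegral.intervalIntegral_pos_of_pos_on (hint _ _ _ _) (fun x hx => ?_) one_pos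
    rw [← h0 p.1 p.2]
    exact hmono _ _ hx.1

lemma modQ_eq (a : Eucl N → Eucl N → ℝ → ℝ) (s : ℝ) (Ω : Set (Eucl N)) (u : Eucl N → ℝ) :
    modQ a s Ω u = gmod (volume.restrict (Qset Ω))
      (fun p => ENNReal.ofReal (dist p.1 p.2 ^ (N : ℝ))⁻¹)
      (fun p t => PhiF a p.1 p.2 t) (Du s u) := by
  funext lam
  unfold modQ gmod Du
  refine lintegral_congr fun p => ?_
  rw [← ENNReal.ofReal_mul (by positivity), div_eq_inv_mul, abs_div,
    abs_of_nonneg (Real.rpow_nonneg dist_nonneg s), div_div, mul_comm lam]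

lemma modO_eq (a : Eucl N → Eucl N → ℝ → ℝ) (Ω : Set (Eucl N)) (u : Eucl N → ℝ) :
    modO a Ω u = gmod (volume.restrict Ω) (fun _ => 1) (fun x t => PhiF a x x t) u := by
  funext lam
  simp [modO, gmod]

lemma modB_eq (a : Eucl N → Eucl N → ℝ → ℝ) (Ω : Set (Eucl N)) (β u : Eucl N → ℝ)
    (h : GoodPsi (fun x t => PhiF a x x t)) :
    lux (modB a Ω β u) = lux (gmod (volume.restrict Ωᶜ) (fun x => ENNReal.ofReal (β x))
      (fun x t => PhiF a x x t) u) := by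
  unfold lux
  congr 1
  ext l
  refine exists_congr fun lam => and_congr_right fun hl => and_congr_right fun _ => ?_
  have : modB a Ω β u lam = gmod (volume.restrict Ωᶜ) (fun x => ENNReal.ofReal (β x))
      (fun x t => PhiF a x x t) u lam := by
    refine lintegral_congr fun x => ?_
    exact ENNReal.ofReal_mul' (h.nonneg x _ (by positivity))
  rw [this]

/-- `X` is complete for the norm `‖·‖_X`. -/
theorem statement3
    (N : ℕ) (hN : 1 ≤ N)
    (Ω : Set (Eucl N)) (hΩo : IsOpen Ω) (hΩb : Bornology.IsBounded Ω) (hΩne : Ω.Nonempty)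
    (s : ℝ) (hs : s ∈ Set.Ioo (0:ℝ) 1)
    (a : Eucl N → Eucl N → ℝ → ℝ)
    (ha : Measurable fun p : Eucl N × Eucl N × ℝ => a p.1 p.2.1 p.2.2)
    (hmono : ∀ x y, StrictMono (phiF a x y))
    (hcont : ∀ x y, Continuous (phiF a x y))
    (hsurj : ∀ x y, Function.Surjective (phiF a x y))
    (β : Eucl N → ℝ) (hβm : Measurable β)
    (hβb : ∃ C : ℝ, ∀ᵐ x ∂(volume.restrict Ωᶜ), |β x| ≤ C)
    (hβ0 : ∀ᵐ x ∂(volume.restrict Ωᶜ), 0 ≤ β x)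
    (φm φp : ℝ) (hφm : 1 < φm) (hφmp : φm ≤ φp)
    (hΦ1 : ∀ x y t, 0 < t →
      φm ≤ t * phiF a x y t / PhiF a x y t ∧ t * phiF a x y t / PhiF a x y t ≤ φp)
    (useq : ℕ → Eucl N → ℝ) (hseq : ∀ n, useq n ∈ XsetX a s Ω β)
    (hcauchy : ∀ ε : ℝ, 0 < ε → ∃ M : ℕ, ∀ n m : ℕ, M ≤ n → M ≤ m →
      normX a s Ω β (fun x => useq n x - useq m x) < ENNReal.ofReal ε) :
    ∃ u ∈ XsetX a s Ω β,
      Tendsto (fun n => normX a s Ω β (fun x => useq n x - u x)) atTop (nhds 0) ∧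
      ∃ ns : ℕ → ℕ, StrictMono ns ∧
        ∀ᵐ x : Eucl N, Tendsto (fun k => useq (ns k) x) atTop (nhds (u x)) := by
  have hG := goodPsi_PhiF a ha hmono hcont
  have hD : GoodPsi (fun (x : Eucl N) t => PhiF a x x t) :=
    hG.comp (g := fun x : Eucl N => (x, x)) (by fun_prop)
  set wQ : Eucl N × Eucl N → ℝ≥0∞ := fun p => ENNReal.ofReal (dist p.1 p.2 ^ (N : ℝ))⁻¹ with hwQ
  set wB : Eucl N → ℝ≥0∞ := fun x => ENNReal.ofReal (β x) with hwB
  set μQ : Measure (Eucl N × Eucl N) := volume.restrict (Qset Ω) with hμQ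
  have hwQm : Measurable wQ := by
    have : Measurable fun p : Eucl N × Eucl N => dist p.1 p.2 := measurable_dist
    exact ((this.pow_const _).inv).ennreal_ofReal
  have hwBm : Measurable wB := hβm.ennreal_ofReal
  have hnorm : ∀ u, normX a s Ω β u =
      lux (gmod μQ wQ (fun p t => PhiF a p.1 p.2 t) (Du s u)) +
      lux (gmod (volume.restrict Ω) (fun _ => 1) (fun x t => PhiF a x x t) u) +
      lux (gmod (volume.restrict Ωᶜ) wB (fun x t => PhiF a x x t) u) := by
    intro u
    rw [normX, modQ_eq, modO_eq, modB_eq a Ω β u hD]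
  have hDu : ∀ u v : Eucl N → ℝ, Du s (fun x => u x - v x) = fun p => Du s u p - Du s v p := by
    intro u v
    funext p
    simp only [Du]
    ring
  have hDum : ∀ u : Eucl N → ℝ, Measurable u → Measurable (Du s u) := by
    intro u hu
    have : Measurable fun p : Eucl N × Eucl N => dist p.1 p.2 := measurable_dist
    exact ((hu.comp measurable_fst).sub (hu.comp measurable_snd)).div (this.pow_const _)
  have hum : ∀ n, Measurable (useq n) := fun n => (hseq n).1
  -- consequences of the Cauchy condition
  have hC : ∀ ε : ℝ, 0 < ε → ∃ M : ℕ, ∀ n m : ℕ, M ≤ n → M ≤ m →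
      gmod μQ wQ (fun p t => PhiF a p.1 p.2 t)
        (fun p => Du s (useq n) p - Du s (useq m) p) ε ≤ 1 ∧
      gmod (volume.restrict Ω) (fun _ => 1) (fun x t => PhiF a x x t)
        (fun x => useq n x - useq m x) ε ≤ 1 ∧
      gmod (volume.restrict Ωᶜ) wB (fun x t => PhiF a x x t)
        (fun x => useq n x - useq m x) ε ≤ 1 := by
    intro ε hε
    obtain ⟨M, hM⟩ := hcauchy ε hε
    refine ⟨M, fun n m hn hm => ?_⟩
    have h := hM n m hn hm
    rw [hnorm, hDu] at h
    refine ⟨hG.gmod_le_one _ (lt_of_le_of_lt ?_ h), hD.gmod_le_one _ (lt_of_le_of_lt ?_ h),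
      hD.gmod_le_one _ (lt_of_le_of_lt ?_ h)⟩
    · rw [add_assoc]; exact le_self_add
    · exact le_add_self.trans le_self_add
    · exact le_add_self
  have hsub : ∀ k : ℕ, ∃ M, ∀ j ≥ M, ∀ n m : ℕ, j ≤ n → j ≤ m →
      gmod μQ wQ (fun p t => PhiF a p.1 p.2 t)
        (fun p => Du s (useq n) p - Du s (useq m) p) ((1 / 4) ^ k) ≤ 1 ∧
      gmod (volume.restrict Ω) (fun _ => 1) (fun x t => PhiF a x x t)
        (fun x => useq n x - useq m x) ((1 / 4) ^ k) ≤ 1 := by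
    intro k
    obtain ⟨M, hM⟩ := hC ((1 / 4) ^ k) (by positivity)
    exact ⟨M, fun j hj n m hn hm =>
      ⟨(hM n m (hj.trans hn) (hj.trans hm)).1, (hM n m (hj.trans hn) (hj.trans hm)).2.1⟩⟩
  obtain ⟨ns, hns, hnsP⟩ := extraction_forall_of_eventually' hsub
  have hle : ∀ k, ns k ≤ ns (k + 1) := fun k => hns.monotone (Nat.le_succ k)
  have cQ := hG.conv (μ := μQ) hwQm (v := fun k => Du s (useq (ns k))) (fun k => hDum _ (hum _))
    (fun k => (hnsP k _ _ (hle k) le_rfl).1)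
  have cO := hD.conv (μ := volume.restrict Ω) (w := fun _ => 1) measurable_const
    (v := fun k => useq (ns k)) (fun k => hum _)
    (fun k => (hnsP k _ _ (hle k) le_rfl).2)
  have hΩm : MeasurableSet Ω := hΩo.measurableSet
  have hQm : MeasurableSet (Qset Ω) := (hΩm.compl.prod hΩm.compl).compl
  rw [hμQ, ae_restrict_iff' hQm] at cQ
  rw [ae_restrict_iff' hΩm] at cO
  have cQ' := Measure.ae_ae_of_ae_prod (μ := (volume : Measure (Eucl N)))
    (ν := (volume : Measure (Eucl N))) cQ
  have hex : ∃ x ∈ Ω, (∃ l, Tendsto (fun k => useq (ns k) x) atTop (nhds l)) ∧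
      ∀ᵐ y : Eucl N, (x, y) ∈ Qset Ω → wQ (x, y) ≠ 0 →
        ∃ l, Tendsto (fun k => Du s (useq (ns k)) (x, y)) atTop (nhds l) := by
    by_contra hcon
    have : ∀ᵐ x : Eucl N, x ∉ Ω := by
      filter_upwards [cO, cQ'] with x h1 h2 hx
      exact hcon ⟨x, hx, h1 hx one_ne_zero, h2⟩
    have h0 : volume Ω = 0 := by
      simpa [ae_iff] using this
    exact (hΩo.measure_pos volume hΩne).ne' h0
  obtain ⟨x0, hx0, ⟨l0, hl0⟩, hx0ae⟩ := hex
  have hall : ∀ᵐ y : Eucl N, ∃ l, Tendsto (fun k => useq (ns k) y) atTop (nhds l) := by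
    filter_upwards [hx0ae] with y hy
    by_cases hxy : x0 = y
    · exact ⟨l0, hxy ▸ hl0⟩
    · have hd : 0 < dist x0 y := dist_pos.2 hxy
      have hds : dist x0 y ^ s ≠ 0 := (Real.rpow_pos_of_pos hd s).ne'
      obtain ⟨l, hl⟩ := hy (by simp [Qset, hx0]) (by
        simp only [hwQ]
        exact (ENNReal.ofReal_pos.2 (inv_pos.2 (Real.rpow_pos_of_pos hd _))).ne')
      refine ⟨l0 - l * dist x0 y ^ s, ?_⟩
      refine (hl0.sub (hl.mul_const (dist x0 y ^ s))).congr fun k => ?_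
      simp only [Du]
      rw [div_mul_cancel₀ _ hds]
      ring
  obtain ⟨u, hu, hlim⟩ := measurable_limit_of_tendsto_metrizable_ae
    (fun k => (hum (ns k)).aemeasurable) hall
  have hlimQ : ∀ᵐ p : Eucl N × Eucl N,
      Tendsto (fun k => Du s (useq (ns k)) p) atTop (nhds (Du s u p)) := by
    have f1 := (Measure.quasiMeasurePreserving_fst (μ := (volume : Measure (Eucl N)))
      (ν := (volume : Measure (Eucl N)))).ae hlim
    have f2 := (Measure.quasiMeasurePreserving_snd (μ := (volume : Measure (Eucl N)))
      (ν := (volume : Measure (Eucl N)))).ae hlim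
    filter_upwards [f1, f2] with p h1 h2
    exact (h1.sub h2).div_const _
  have hfin : ∀ ε : ℝ, 0 < ε → ∃ M : ℕ, ∀ n, M ≤ n →
      lux (gmod μQ wQ (fun p t => PhiF a p.1 p.2 t) (fun p => Du s (useq n) p - Du s u p))
        ≤ ENNReal.ofReal ε ∧
      lux (gmod (volume.restrict Ω) (fun _ => 1) (fun x t => PhiF a x x t)
        (fun x => useq n x - u x)) ≤ ENNReal.ofReal ε ∧
      lux (gmod (volume.restrict Ωᶜ) wB (fun x t => PhiF a x x t)
        (fun x => useq n x - u x)) ≤ ENNReal.ofReal ε := by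
    intro ε hε
    obtain ⟨M, hM⟩ := hC ε hε
    refine ⟨M, fun n hn => ?_⟩
    have hev : ∀ᶠ k in atTop, M ≤ ns k := hns.tendsto_atTop.eventually_ge_atTop M
    refine ⟨lux_le hε ?_, lux_le hε ?_, lux_le hε ?_⟩
    · refine hG.fatou hwQm (v := fun k p => Du s (useq n) p - Du s (useq (ns k)) p)
        (fun k => (hDum _ (hum _)).sub (hDum _ (hum _))) ?_ ?_ ?_
      · filter_upwards [hev] with k hk using (hM n _ hn hk).1
      · filter_upwards [ae_restrict_of_ae hlimQ] with p hp using tendsto_const_nhds.sub hp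
      · exact Eventually.of_forall fun p => ENNReal.ofReal_ne_top
    · refine hD.fatou measurable_const (v := fun k x => useq n x - useq (ns k) x)
        (fun k => (hum _).sub (hum _)) ?_ ?_ ?_
      · filter_upwards [hev] with k hk using (hM n _ hn hk).2.1
      · filter_upwards [ae_restrict_of_ae hlim] with p hp using tendsto_const_nhds.sub hp
      · exact Eventually.of_forall fun p => ENNReal.one_ne_top
    · refine hD.fatou hwBm (v := fun k x => useq n x - useq (ns k) x)
        (fun k => (hum _).sub (hum _)) ?_ ?_ ?_
      · filter_upwards [hev] with k hk using (hM n _ hn hk).2.2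
      · filter_upwards [ae_restrict_of_ae hlim] with p hp using tendsto_const_nhds.sub hp
      · exact Eventually.of_forall fun p => ENNReal.ofReal_ne_top
  refine ⟨u, ⟨hu, ?_⟩, ?_, ns, hns, hlim⟩
  · obtain ⟨M, hM⟩ := hfin 1 one_pos
    obtain ⟨h1, h2, h3⟩ := hM M le_rfl
    have hX := (hseq M).2
    rw [hnorm] at hX ⊢
    obtain ⟨hX12, hX3⟩ := ENNReal.add_lt_top.1 hX
    obtain ⟨hX1, hX2⟩ := ENNReal.add_lt_top.1 hX12
    refine ENNReal.add_lt_top.2 ⟨ENNReal.add_lt_top.2 ⟨?_, ?_⟩, ?_⟩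
    · exact hG.lux_add hwQm (hDum _ (hum M)) hX1 (h1.trans_lt ENNReal.ofReal_lt_top)
    · exact hD.lux_add measurable_const (hum M) hX2 (h2.trans_lt ENNReal.ofReal_lt_top)
    · exact hD.lux_add hwBm (hum M) hX3 (h3.trans_lt ENNReal.ofReal_lt_top)
  · have hb : ∀ ε : ℝ, 0 < ε → ∀ᶠ n in atTop,
        normX a s Ω β (fun x => useq n x - u x) ≤ ENNReal.ofReal ε := by
      intro ε hε
      obtain ⟨M, hM⟩ := hfin (ε / 3) (by positivity)
      filter_upwards [eventually_ge_atTop M] with n hn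
      obtain ⟨h1, h2, h3⟩ := hM n hn
      rw [hnorm, hDu]
      refine (add_le_add (add_le_add h1 h2) h3).trans ?_
      rw [← ENNReal.ofReal_add (by positivity) (by positivity),
        ← ENNReal.ofReal_add (by positivity) (by positivity)]
      exact ENNReal.ofReal_le_ofReal (by linarith)
    rw [ENNReal.tendsto_nhds_zero]
    intro ε hε
    by_cases htop : ε = ⊤
    · exact Eventually.of_forall fun n => htop ▸ le_top
    · have := hb ε.toReal (ENNReal.toReal_pos hε.ne' htop)
      rwa [ENNReal.ofReal_toReal htop] at this
end
end

section
/- Assume (Φ1), assume |f(x,t)| ≤ c₁|t|^{q(x)−1} for all x ∈ Ω, t ∈ ℝ with a constant c₁ > 0, and assume ∫_Ω |u(x)|^{q(x)} dx < ∞ for every u ∈ X. Then for every λ > 0 and all u, v ∈ X, the limit lim_{t→0} (J_λ(u + t·v) − J_λ(u))/t exists and equals (1/2)∬_Q a(x,y,|D^s u|)·D^s u·D^s v·dx dy/|x − y|^N + ∫_Ω â_x(|u|)·u·v dx + ∫_{CΩ} β(x)·â_x(|u|)·u·v dx − λ∫_Ω f(x,u(x))·v(x) dx. -/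
open MeasureTheory Set Filter
open scoped ENNReal

noncomputable section

variable {N : ℕ}

/-- General differentiation lemma. -/
theorem aux_gen {α : Type*} [MeasurableSpace α] (μ : Measure α) (g : α → ℝ → ℝ)
    (hgm : Measurable fun p : α × ℝ => g p.1 p.2) (hgc : ∀ x, Continuous (g x))
    (U V B : α → ℝ) (hU : Measurable U) (hV : Measurable V) (hB : Integrable B μ)
    (hb : ∀ᵐ x ∂μ, ∀ τ, |τ| ≤ |U x| + |V x| → |g x τ| * (|U x| + |V x|) ≤ B x) :
    HasDerivAt (fun t : ℝ => ∫ x, (∫ τ in (0:ℝ)..(U x + t * V x), g x τ) ∂μ)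
      (∫ x, g x (U x) * V x ∂μ) 0 := by
  have hGm : ∀ W : α → ℝ, Measurable W →
      Measurable fun x => ∫ τ in (0:ℝ)..(W x), g x τ := by
    intro W hW
    have h1 : (fun x => ∫ τ in (0:ℝ)..(W x), g x τ)
        = fun x => W x * ∫ τ in Set.Ioc (0:ℝ) 1, g x (W x * τ) := by
      funext x
      have := intervalIntegral.mul_integral_comp_mul_left (a := (0:ℝ)) (b := 1)
        (f := g x) (c := W x)
      rw [mul_zero, mul_one] at this
      rw [← this, intervalIntegral.integral_of_le zero_le_one]
    rw [h1]
    refine hW.mul ?_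
    have h2 : StronglyMeasurable fun p : α × ℝ => g p.1 (W p.1 * p.2) := by
      apply Measurable.stronglyMeasurable
      exact hgm.comp (measurable_fst.prodMk ((hW.comp measurable_fst).mul measurable_snd))
    exact (h2.integral_prod_right (ν := volume.restrict (Set.Ioc (0:ℝ) 1))).measurable
  have hder : ∀ x t, HasDerivAt (fun t : ℝ => ∫ τ in (0:ℝ)..(U x + t * V x), g x τ)
      (g x (U x + t * V x) * V x) t := by
    intro x t
    have h1 : HasDerivAt (fun r : ℝ => ∫ τ in (0:ℝ)..r, g x τ) (g x (U x + t * V x))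
        (U x + t * V x) := (hgc x).integral_hasStrictDerivAt 0 _ |>.hasDerivAt
    have h2 : HasDerivAt (fun t : ℝ => U x + t * V x) (V x) t := by
      simpa using ((hasDerivAt_id t).mul_const (V x)).const_add (U x)
    exact h1.comp t h2
  have key := hasDerivAt_integral_of_dominated_loc_of_deriv_le (μ := μ) (𝕜 := ℝ)
    (F := fun t x => ∫ τ in (0:ℝ)..(U x + t * V x), g x τ)
    (F' := fun t x => g x (U x + t * V x) * V x) (x₀ := (0:ℝ)) (s := Metric.ball 0 1)
    (bound := B) (Metric.ball_mem_nhds 0 one_pos)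
    (Eventually.of_forall fun t => (hGm _ (hU.add (hV.const_mul t))).aestronglyMeasurable)
    ?_ ?_ ?_ hB (Eventually.of_forall fun x t _ => hder x t)
  · simpa using key.2
  · refine Integrable.mono' hB (hGm _ (hU.add (hV.const_mul 0))).aestronglyMeasurable ?_
    filter_upwards [hb] with x hx
    rw [zero_mul, add_zero]
    set M := |U x| + |V x| with hM
    have hV0 := abs_nonneg (V x)
    have hU0 := abs_nonneg (U x)
    rcases eq_or_lt_of_le (show 0 ≤ M by positivity) with h0 | h0
    · have hUx : U x = 0 := by
        apply abs_eq_zero.1; linarith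
      rw [hUx]
      have := hx 0 (by simp [← h0])
      rw [← h0] at this
      simpa using this
    · have h1 : ‖∫ τ in (0:ℝ)..(U x), g x τ‖ ≤ (B x / M) * |U x - 0| := by
        apply intervalIntegral.norm_integral_le_of_norm_le_const
        intro τ hτ
        rw [le_div_iff₀ h0]
        apply hx
        have := Set.uIoc_subset_uIcc hτ
        have h2 := Set.abs_sub_left_of_mem_uIcc this
        simp at h2
        linarith
      refine h1.trans ?_
      rw [sub_zero]
      have hBn : 0 ≤ B x := by
        refine le_trans ?_ (hx 0 (by simpa using h0.le))
        positivity
      calc B x / M * |U x| ≤ B x / M * M := by gcongr; linarith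
        _ = B x := by field_simp
  · apply Measurable.aestronglyMeasurable
    exact (hgm.comp (measurable_id.prodMk (hU.add (hV.const_mul 0)))).mul hV
  · filter_upwards [hb] with x hx t ht
    have ht' : |t| ≤ 1 := by
      rw [mem_ball_zero_iff, Real.norm_eq_abs] at ht
      exact ht.le
    rw [norm_mul, Real.norm_eq_abs, Real.norm_eq_abs]
    have h1 : |U x + t * V x| ≤ |U x| + |V x| := by
      refine (abs_add_le _ _).trans ?_
      rw [abs_mul]
      nlinarith [abs_nonneg (V x)]
    refine le_trans ?_ (hx _ h1)
    gcongr
    linarith [abs_nonneg (U x)]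

theorem aux_odd (a : Eucl N → Eucl N → ℝ → ℝ) (x y : Eucl N) (t : ℝ) :
    phiF a x y (-t) = - phiF a x y t := by
  unfold phiF
  by_cases h : t = 0 <;> simp [h]

theorem aux_even (a : Eucl N → Eucl N → ℝ → ℝ) (x y : Eucl N) (t : ℝ) :
    PhiF a x y |t| = PhiF a x y t := by
  rcases abs_choice t with h | h
  · rw [h]
  · rw [h]
    unfold PhiF
    have := intervalIntegral.integral_comp_neg (a := (0:ℝ)) (b := t) (phiF a x y)
    simp only [aux_odd, neg_zero, intervalIntegral.integral_neg] at this
    rw [intervalIntegral.integral_symm, ← this, neg_neg]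

theorem aux_deriv (a : Eucl N → Eucl N → ℝ → ℝ) (x y : Eucl N)
    (hcont : Continuous (phiF a x y)) (t : ℝ) :
    HasDerivAt (PhiF a x y) (phiF a x y t) t :=
  (hcont.integral_hasStrictDerivAt 0 t).hasDerivAt

theorem aux_phi0 (a : Eucl N → Eucl N → ℝ → ℝ) (x y : Eucl N) : phiF a x y 0 = 0 := by
  simp [phiF]

theorem aux_Phi0 (a : Eucl N → Eucl N → ℝ → ℝ) (x y : Eucl N) : PhiF a x y 0 = 0 := by
  simp [PhiF]

theorem aux_mono (a : Eucl N → Eucl N → ℝ → ℝ) (x y : Eucl N)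
    (hmono : StrictMono (phiF a x y)) (hcont : Continuous (phiF a x y)) :
    MonotoneOn (PhiF a x y) (Set.Ici 0) := by
  apply monotoneOn_of_deriv_nonneg (convex_Ici 0)
  · exact fun t _ => (aux_deriv a x y hcont t).continuousAt.continuousWithinAt
  · exact fun t _ => (aux_deriv a x y hcont t).differentiableAt.differentiableWithinAt
  · intro t ht
    rw [interior_Ici] at ht
    rw [(aux_deriv a x y hcont t).deriv, ← aux_phi0 a x y]
    exact hmono.monotone (le_of_lt ht)

theorem aux_nonneg (a : Eucl N → Eucl N → ℝ → ℝ) (x y : Eucl N)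
    (hmono : StrictMono (phiF a x y)) (hcont : Continuous (phiF a x y)) (t : ℝ) :
    0 ≤ PhiF a x y t := by
  rw [← aux_even, ← aux_Phi0 a x y]
  exact aux_mono a x y hmono hcont Set.self_mem_Ici (abs_nonneg t) (abs_nonneg t)

theorem aux_upper (a : Eucl N → Eucl N → ℝ → ℝ) (x y : Eucl N)
    (hmono : StrictMono (phiF a x y)) (hcont : Continuous (phiF a x y))
    (φm φp : ℝ) (hφm : 1 < φm)
    (hΦ1 : ∀ t, 0 < t →
      φm ≤ t * phiF a x y t / PhiF a x y t ∧ t * phiF a x y t / PhiF a x y t ≤ φp)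
    (t : ℝ) (ht : 0 ≤ t) : t * phiF a x y t ≤ φp * PhiF a x y t := by
  rcases eq_or_lt_of_le ht with h | h
  · subst h; simp [aux_Phi0]
  · have h1 := hΦ1 t h
    have hP : 0 < PhiF a x y t := by
      refine lt_of_le_of_ne (aux_nonneg a x y hmono hcont t) fun h0 => ?_
      rw [← h0, div_zero] at h1
      linarith [h1.1]
    exact (div_le_iff₀ hP).1 h1.2

theorem aux_delta (a : Eucl N → Eucl N → ℝ → ℝ) (x y : Eucl N)
    (hmono : StrictMono (phiF a x y)) (hcont : Continuous (phiF a x y))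
    (φm φp : ℝ) (hφm : 1 < φm)
    (hΦ1 : ∀ t, 0 < t →
      φm ≤ t * phiF a x y t / PhiF a x y t ∧ t * phiF a x y t / PhiF a x y t ≤ φp)
    (k t : ℝ) (hk : 1 ≤ k) (ht : 0 ≤ t) : PhiF a x y (k * t) ≤ k ^ φp * PhiF a x y t := by
  rcases eq_or_lt_of_le ht with h | h
  · subst h; simp [aux_Phi0]
  have hd : ∀ r ∈ Set.Ioi (0:ℝ), HasDerivAt (fun r => PhiF a x y r * r ^ (-φp))
      (phiF a x y r * r ^ (-φp) + PhiF a x y r * (-φp * r ^ (-φp - 1))) r := by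
    intro r hr
    exact (aux_deriv a x y hcont r).mul (Real.hasDerivAt_rpow_const (Or.inl (ne_of_gt hr)))
  have hanti : AntitoneOn (fun r => PhiF a x y r * r ^ (-φp)) (Set.Ioi 0) := by
    apply antitoneOn_of_deriv_nonpos (convex_Ioi 0)
    · exact fun r hr => (hd r hr).continuousAt.continuousWithinAt
    · rw [interior_Ioi]
      exact fun r hr => (hd r hr).differentiableAt.differentiableWithinAt
    · rw [interior_Ioi]
      intro r hr
      rw [(hd r hr).deriv]
      have hr' : (0:ℝ) < r := hr
      have h1 : r ^ (-φp) = r * r ^ (-φp - 1) := by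
        rw [Real.rpow_sub_one hr'.ne']; field_simp
      have h2 := aux_upper a x y hmono hcont φm φp hφm hΦ1 r hr'.le
      have h3 : 0 < r ^ (-φp - 1) := Real.rpow_pos_of_pos hr' _
      rw [h1]
      nlinarith
  have hkt : 0 < k * t := by positivity
  have h1 := hanti (show t ∈ Set.Ioi (0:ℝ) from h) (show k * t ∈ Set.Ioi (0:ℝ) from hkt)
    (by nlinarith)
  simp only at h1
  have hk0 : 0 < k := by linarith
  rw [Real.rpow_neg hkt.le, Real.rpow_neg h.le, Real.mul_rpow hk0.le h.le] at h1
  have h2 : 0 < k ^ φp := Real.rpow_pos_of_pos hk0 _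
  have h3 : 0 < t ^ φp := Real.rpow_pos_of_pos h _
  rw [← div_eq_mul_inv, ← div_eq_mul_inv, div_le_div_iff₀ (by positivity) h3] at h1
  have h4 : PhiF a x y (k * t) * t ^ φp ≤ (k ^ φp * PhiF a x y t) * t ^ φp := by linarith
  exact le_of_mul_le_mul_right h4 h3

theorem aux_bound (a : Eucl N → Eucl N → ℝ → ℝ) (x y : Eucl N)
    (hmono : StrictMono (phiF a x y)) (hcont : Continuous (phiF a x y))
    (φm φp : ℝ) (hφm : 1 < φm) (hφp : 0 ≤ φp)
    (hΦ1 : ∀ t, 0 < t →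
      φm ≤ t * phiF a x y t / PhiF a x y t ∧ t * phiF a x y t / PhiF a x y t ≤ φp)
    (l₁ l₂ : ℝ) (hl₁ : 0 < l₁) (hl₂ : 0 < l₂) (U V τ : ℝ) (hτ : |τ| ≤ |U| + |V|) :
    |phiF a x y τ| * (|U| + |V|) ≤
      φp * ((max 1 (2 * l₁)) ^ φp * PhiF a x y (|U| / l₁)
        + (max 1 (2 * l₂)) ^ φp * PhiF a x y (|V| / l₂)) := by
  have hU := abs_nonneg U
  have hV := abs_nonneg V
  have hP := aux_mono a x y hmono hcont
  have hnn := aux_nonneg a x y hmono hcont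
  have hscale : ∀ l : ℝ, 0 < l → ∀ W : ℝ, 0 ≤ W →
      PhiF a x y (2 * W) ≤ (max 1 (2 * l)) ^ φp * PhiF a x y (W / l) := by
    intro l hl W hW
    refine le_trans ?_ (aux_delta a x y hmono hcont φm φp hφm hΦ1 _ (W / l)
      (le_max_left 1 (2 * l)) (by positivity))
    have h1 : 2 * W ≤ max 1 (2 * l) * (W / l) := by
      calc 2 * W = (2 * l) * (W / l) := by field_simp
        _ ≤ _ := by gcongr; exact le_max_right _ _
    exact hP (show (0:ℝ) ≤ 2 * W by positivity)
      (show (0:ℝ) ≤ max 1 (2 * l) * (W / l) by linarith) h1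
  have h1 : |phiF a x y τ| ≤ phiF a x y (|U| + |V|) := by
    rw [abs_le, ← aux_odd]
    rw [abs_le] at hτ
    exact ⟨hmono.monotone hτ.1, hmono.monotone hτ.2⟩
  have h2 : PhiF a x y (|U| + |V|) ≤ PhiF a x y (2 * |U|) + PhiF a x y (2 * |V|) := by
    rcases le_total |U| |V| with h | h
    · have := hP (show (0:ℝ) ≤ |U| + |V| by positivity) (show (0:ℝ) ≤ 2 * |V| by positivity)
        (by linarith)
      linarith [hnn (2 * |U|)]
    · have := hP (show (0:ℝ) ≤ |U| + |V| by positivity) (show (0:ℝ) ≤ 2 * |U| by positivity)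
        (by linarith)
      linarith [hnn (2 * |V|)]
  calc |phiF a x y τ| * (|U| + |V|) ≤ phiF a x y (|U| + |V|) * (|U| + |V|) := by gcongr
    _ ≤ φp * PhiF a x y (|U| + |V|) := by
      have := aux_upper a x y hmono hcont φm φp hφm hΦ1 (|U| + |V|) (by positivity)
      linarith
    _ ≤ _ := by
      have := hscale l₁ hl₁ |U| hU
      have := hscale l₂ hl₂ |V| hV
      gcongr
      linarith

theorem aux_phi_meas (a : Eucl N → Eucl N → ℝ → ℝ)
    (ha : Measurable fun p : Eucl N × Eucl N × ℝ => a p.1 p.2.1 p.2.2)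
    {α : Type*} [MeasurableSpace α] (X Y : α → Eucl N) (T : α → ℝ)
    (hX : Measurable X) (hY : Measurable Y) (hT : Measurable T) :
    Measurable fun p => phiF a (X p) (Y p) (T p) := by
  unfold phiF
  refine Measurable.ite (hT (measurableSet_singleton 0)) measurable_const ?_
  exact (ha.comp (hX.prodMk (hY.prodMk (continuous_abs.measurable.comp hT)))).mul hT

theorem aux_Phi_meas (a : Eucl N → Eucl N → ℝ → ℝ)
    (ha : Measurable fun p : Eucl N × Eucl N × ℝ => a p.1 p.2.1 p.2.2)
    {α : Type*} [MeasurableSpace α] (X Y : α → Eucl N) (T : α → ℝ)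
    (hX : Measurable X) (hY : Measurable Y) (hT : Measurable T) :
    Measurable fun p => PhiF a (X p) (Y p) (T p) := by
  have h1 : (fun p => PhiF a (X p) (Y p) (T p))
      = fun p => T p * ∫ τ in Set.Ioc (0:ℝ) 1, phiF a (X p) (Y p) (T p * τ) := by
    funext x
    have := intervalIntegral.mul_integral_comp_mul_left (a := (0:ℝ)) (b := 1)
      (f := phiF a (X x) (Y x)) (c := T x)
    rw [mul_zero, mul_one] at this
    unfold PhiF
    rw [← this, intervalIntegral.integral_of_le zero_le_one]
  rw [h1]
  refine hT.mul ?_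
  have h2 : StronglyMeasurable fun p : α × ℝ => phiF a (X p.1) (Y p.1) (T p.1 * p.2) := by
    apply Measurable.stronglyMeasurable
    exact aux_phi_meas a ha _ _ _ (hX.comp measurable_fst) (hY.comp measurable_fst)
      ((hT.comp measurable_fst).mul measurable_snd)
  exact (h2.integral_prod_right (ν := volume.restrict (Set.Ioc (0:ℝ) 1))).measurable

/-- Differentiation of a modular. -/
theorem aux_modular (a : Eucl N → Eucl N → ℝ → ℝ)
    (ha : Measurable fun p : Eucl N × Eucl N × ℝ => a p.1 p.2.1 p.2.2)
    (hmono : ∀ x y, StrictMono (phiF a x y))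
    (hcont : ∀ x y, Continuous (phiF a x y))
    (φm φp : ℝ) (hφm : 1 < φm) (hφp : 0 ≤ φp)
    (hΦ1 : ∀ x y t, 0 < t →
      φm ≤ t * phiF a x y t / PhiF a x y t ∧ t * phiF a x y t / PhiF a x y t ≤ φp)
    {α : Type*} [MeasurableSpace α] (μ : Measure α) (X Y : α → Eucl N)
    (hX : Measurable X) (hY : Measurable Y) (w : α → ℝ) (hw : Measurable w)
    (hw0 : ∀ᵐ p ∂μ, 0 ≤ w p) (U V : α → ℝ) (hU : Measurable U) (hV : Measurable V)
    (l₁ l₂ : ℝ) (hl₁ : 0 < l₁) (hl₂ : 0 < l₂)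
    (h₁ : ∫⁻ p, ENNReal.ofReal (w p * PhiF a (X p) (Y p) (|U p| / l₁)) ∂μ ≤ 1)
    (h₂ : ∫⁻ p, ENNReal.ofReal (w p * PhiF a (X p) (Y p) (|V p| / l₂)) ∂μ ≤ 1) :
    HasDerivAt (fun t : ℝ =>
        (∫⁻ p, ENNReal.ofReal (w p * PhiF a (X p) (Y p) |U p + t * V p|) ∂μ).toReal)
      (∫ p, w p * phiF a (X p) (Y p) (U p) * V p ∂μ) 0 := by
  have hint : ∀ (W : α → ℝ) (l : ℝ), Measurable W →
      ∫⁻ p, ENNReal.ofReal (w p * PhiF a (X p) (Y p) (|W p| / l)) ∂μ ≤ 1 →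
      Integrable (fun p => w p * PhiF a (X p) (Y p) (|W p| / l)) μ := by
    intro W l hW h
    refine ⟨(hw.mul (aux_Phi_meas a ha X Y _ hX hY
      ((continuous_abs.measurable.comp hW).div_const l))).aestronglyMeasurable, ?_⟩
    rw [hasFiniteIntegral_iff_ofReal]
    · exact h.trans_lt ENNReal.one_lt_top
    · filter_upwards [hw0] with p hp
      exact mul_nonneg hp (aux_nonneg a _ _ (hmono _ _) (hcont _ _) _)
  have key := aux_gen μ (fun p t => w p * phiF a (X p) (Y p) t)
    ((hw.comp measurable_fst).mul (aux_phi_meas a ha _ _ _ (hX.comp measurable_fst)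
      (hY.comp measurable_fst) measurable_snd))
    (fun p => continuous_const.mul (hcont _ _)) U V
    (fun p => φp * ((max 1 (2 * l₁)) ^ φp * (w p * PhiF a (X p) (Y p) (|U p| / l₁))
        + (max 1 (2 * l₂)) ^ φp * (w p * PhiF a (X p) (Y p) (|V p| / l₂)))) hU hV
    ((((hint U l₁ hU h₁).const_mul _).add ((hint V l₂ hV h₂).const_mul _)).const_mul _) ?_
  · convert key using 1
    funext t
    rw [integral_eq_lintegral_of_nonneg_ae]
    · congr 2
      funext p
      rw [aux_even, intervalIntegral.integral_const_mul]
      rfl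
    · filter_upwards [hw0] with p hp
      rw [intervalIntegral.integral_const_mul]
      exact mul_nonneg hp (aux_nonneg a _ _ (hmono _ _) (hcont _ _) _)
    · apply Measurable.aestronglyMeasurable
      simp only [intervalIntegral.integral_const_mul]
      exact hw.mul (aux_Phi_meas a ha X Y _ hX hY (hU.add (hV.const_mul t)))
  · filter_upwards [hw0] with p hp τ hτ
    have := aux_bound a (X p) (Y p) (hmono _ _) (hcont _ _) φm φp hφm hφp (hΦ1 _ _)
      l₁ l₂ hl₁ hl₂ (U p) (V p) τ hτ
    rw [abs_mul, abs_of_nonneg hp]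
    have := mul_le_mul_of_nonneg_left this hp
    linarith

theorem aux_lux (m : ℝ → ℝ≥0∞) (h : lux m < ⊤) : ∃ l : ℝ, 0 < l ∧ m l ≤ 1 := by
  unfold lux at h
  obtain ⟨b, ⟨l, hl, _, hm⟩, _⟩ := sInf_lt_iff.1 h
  exact ⟨l, hl, hm⟩

theorem aux_Ku (a : Eucl N → Eucl N → ℝ → ℝ) (s : ℝ) (u : Eucl N → ℝ) (p : Eucl N × Eucl N) :
    Ku a s u p = phiF a p.1 p.2 (Du s u p) := by
  unfold Ku phiF
  by_cases h : u p.1 = u p.2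
  · simp [h, Du]
  · have hne : p.1 ≠ p.2 := fun h' => h (by rw [h'])
    have : Du s u p ≠ 0 := by
      unfold Du
      exact div_ne_zero (sub_ne_zero.2 h) (Real.rpow_pos_of_pos (dist_pos.2 hne) s).ne'
    simp [h, this]

theorem aux_hat (a : Eucl N → Eucl N → ℝ → ℝ) (x : Eucl N) (t : ℝ) :
    a x x |t| * t = phiF a x x t := by
  unfold phiF
  by_cases h : t = 0 <;> simp [h]

theorem aux_rpow_add (A B q C : ℝ) (hA : 0 ≤ A) (hB : 0 ≤ B) (hq : 0 ≤ q) (hqC : q ≤ C) :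
    (A + B) ^ q ≤ 2 ^ C * (A ^ q + B ^ q) := by
  have h2 : (2:ℝ) ^ q ≤ 2 ^ C := Real.rpow_le_rpow_of_exponent_le (by norm_num) hqC
  have hA' : 0 ≤ A ^ q := Real.rpow_nonneg hA q
  have hB' : 0 ≤ B ^ q := Real.rpow_nonneg hB q
  have hm : (A + B) ^ q ≤ 2 ^ q * (max A B) ^ q := by
    rw [← Real.mul_rpow (by norm_num) (le_max_of_le_left hA)]
    apply Real.rpow_le_rpow (by positivity) _ hq
    linarith [le_max_left A B, le_max_right A B]
  refine hm.trans ?_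
  refine mul_le_mul h2 ?_ (Real.rpow_nonneg (le_max_of_le_left hA) q) (by positivity)
  rcases max_choice A B with h | h <;> rw [h] <;> linarith

/-- Gâteaux differentiability of the energy functional `J_λ`. -/
theorem statement9
    (N : ℕ) (hN : 1 ≤ N)
    (Ω : Set (Eucl N)) (hΩo : IsOpen Ω) (hΩb : Bornology.IsBounded Ω) (hΩne : Ω.Nonempty)
    (s : ℝ) (hs : s ∈ Set.Ioo (0:ℝ) 1)
    (a : Eucl N → Eucl N → ℝ → ℝ)
    (ha : Measurable fun p : Eucl N × Eucl N × ℝ => a p.1 p.2.1 p.2.2)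
    (hmono : ∀ x y, StrictMono (phiF a x y))
    (hcont : ∀ x y, Continuous (phiF a x y))
    (hsurj : ∀ x y, Function.Surjective (phiF a x y))
    (β : Eucl N → ℝ) (hβm : Measurable β)
    (hβb : ∃ C : ℝ, ∀ᵐ x ∂(volume.restrict Ωᶜ), |β x| ≤ C)
    (hβ0 : ∀ᵐ x ∂(volume.restrict Ωᶜ), 0 ≤ β x)
    (φm φp : ℝ) (hφm : 1 < φm) (hφmp : φm ≤ φp)
    (hΦ1 : ∀ x y t, 0 < t →
      φm ≤ t * phiF a x y t / PhiF a x y t ∧ t * phiF a x y t / PhiF a x y t ≤ φp)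
    (hsym : ∀ x y t, a x y t = a y x t)
    (q : Eucl N → ℝ) (hqc : ContinuousOn q (closure Ω)) (hq1 : ∀ x ∈ closure Ω, 1 < q x)
    (f : Eucl N → ℝ → ℝ)
    (hfmeas : ∀ t : ℝ, Measurable fun x => f x t)
    (hfcont : ∀ x : Eucl N, Continuous fun t => f x t)
    (c₁ : ℝ) (hc₁ : 0 < c₁)
    (hf : ∀ x ∈ Ω, ∀ t : ℝ, |f x t| ≤ c₁ * |t| ^ (q x - 1))
    (hqint : ∀ u ∈ XsetX a s Ω β, (∫⁻ x in Ω, ENNReal.ofReal (|u x| ^ q x)) < ⊤) :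
    ∀ lam : ℝ, 0 < lam → ∀ u ∈ XsetX a s Ω β, ∀ v ∈ XsetX a s Ω β,
      Tendsto
        (fun t : ℝ =>
          (Jlam a s Ω β f lam (fun x => u x + t * v x) - Jlam a s Ω β f lam u) / t)
        (nhdsWithin 0 {(0:ℝ)}ᶜ)
        (nhds (Aform a s Ω β u v - lam * ∫ x in Ω, f x (u x) * v x)) := by
  intro lam _ u hu v hv
  have hφp : 0 ≤ φp := by linarith
  obtain ⟨hum, hun⟩ := hu
  obtain ⟨hvm, hvn⟩ := hv
  have hun' := hun
  have hvn' := hvn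
  unfold normX at hun' hvn'
  rw [ENNReal.add_lt_top, ENNReal.add_lt_top] at hun' hvn'
  obtain ⟨⟨hu1, hu2⟩, hu3⟩ := hun'
  obtain ⟨⟨hv1, hv2⟩, hv3⟩ := hvn'
  have hDum : ∀ w : Eucl N → ℝ, Measurable w → Measurable (Du s w) := by
    intro w hw
    unfold Du
    exact ((hw.comp measurable_fst).sub (hw.comp measurable_snd)).div
      (measurable_dist.pow_const s)
  -- the term on `Q`
  have hQ : HasDerivAt (fun t : ℝ => (modQ a s Ω (fun x => u x + t * v x) 1).toReal)
      (∫ p in Qset Ω, Ku a s u p * Du s v p / dist p.1 p.2 ^ (N : ℝ)) 0 := by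
    obtain ⟨l₁, hl₁, h₁⟩ := aux_lux _ hu1
    obtain ⟨l₂, hl₂, h₂⟩ := aux_lux _ hv1
    have hrw : ∀ (w : Eucl N → ℝ) (l : ℝ), 0 < l → ∀ p : Eucl N × Eucl N,
        PhiF a p.1 p.2 (|w p.1 - w p.2| / (l * dist p.1 p.2 ^ s)) / dist p.1 p.2 ^ (N : ℝ)
        = (dist p.1 p.2 ^ (N : ℝ))⁻¹ * PhiF a p.1 p.2 (|Du s w p| / l) := by
      intro w l hl p
      have : |w p.1 - w p.2| / (l * dist p.1 p.2 ^ s) = |Du s w p| / l := by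
        unfold Du
        rw [abs_div, abs_of_nonneg (Real.rpow_nonneg dist_nonneg s), div_div, mul_comm l]
      rw [this, div_eq_inv_mul]
    unfold modQ at h₁ h₂
    simp only [hrw _ _ hl₁] at h₁
    simp only [hrw _ _ hl₂] at h₂
    have key := aux_modular a ha hmono hcont φm φp hφm hφp hΦ1 (volume.restrict (Qset Ω))
      Prod.fst Prod.snd measurable_fst measurable_snd
      (fun p => (dist p.1 p.2 ^ (N : ℝ))⁻¹) ((measurable_dist.pow_const (N : ℝ)).inv)
      (Eventually.of_forall fun p => inv_nonneg.2 (Real.rpow_nonneg dist_nonneg _))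
      (Du s u) (Du s v) (hDum u hum) (hDum v hvm) l₁ l₂ hl₁ hl₂ h₁ h₂
    convert key using 1
    · funext t
      unfold modQ
      congr 2
      funext p
      have hD : Du s (fun x => u x + t * v x) p = Du s u p + t * Du s v p := by
        unfold Du
        ring
      have h := hrw (fun x => u x + t * v x) 1 one_pos p
      rw [hD, div_one] at h
      exact congrArg ENNReal.ofReal h
    · congr 1
      funext p
      rw [aux_Ku, div_eq_inv_mul, mul_assoc]
  have hO : HasDerivAt (fun t : ℝ => (modO a Ω (fun x => u x + t * v x) 1).toReal)
      (∫ x in Ω, a x x |u x| * u x * v x) 0 := by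
    obtain ⟨l₁, hl₁, h₁⟩ := aux_lux _ hu2
    obtain ⟨l₂, hl₂, h₂⟩ := aux_lux _ hv2
    have key := aux_modular a ha hmono hcont φm φp hφm hφp hΦ1 (volume.restrict Ω)
      id id measurable_id measurable_id (fun _ => 1) measurable_const
      (Eventually.of_forall fun p => zero_le_one) u v hum hvm l₁ l₂ hl₁ hl₂
      (by simpa [modO] using h₁) (by simpa [modO] using h₂)
    convert key using 1
    · funext t
      simp [modO]
    · simp [aux_hat]
  have hB : HasDerivAt (fun t : ℝ => (modB a Ω β (fun x => u x + t * v x) 1).toReal)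
      (∫ x in Ωᶜ, β x * (a x x |u x| * u x * v x)) 0 := by
    obtain ⟨l₁, hl₁, h₁⟩ := aux_lux _ hu3
    obtain ⟨l₂, hl₂, h₂⟩ := aux_lux _ hv3
    have key := aux_modular a ha hmono hcont φm φp hφm hφp hΦ1 (volume.restrict Ωᶜ)
      id id measurable_id measurable_id β hβm hβ0 u v hum hvm l₁ l₂ hl₁ hl₂ h₁ h₂
    convert key using 1
    · funext t
      simp [modB]
    · simp [aux_hat, mul_assoc]
  have hF : HasDerivAt (fun t : ℝ => ∫ x in Ω, Ff f x (u x + t * v x))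
      (∫ x in Ω, f x (u x) * v x) 0 := by
    obtain ⟨C, hC⟩ : ∃ C, ∀ x ∈ closure Ω, q x ≤ C := by
      obtain ⟨C, hC⟩ := (hΩb.isCompact_closure.image_of_continuousOn hqc).bddAbove
      exact ⟨C, fun x hx => hC ⟨x, hx, rfl⟩⟩
    have hqm : AEMeasurable q (volume.restrict Ω) :=
      (hqc.mono subset_closure).aemeasurable hΩo.measurableSet
    have hint : ∀ w ∈ XsetX a s Ω β, Integrable (fun x => |w x| ^ q x) (volume.restrict Ω) := by
      intro w hw
      refine ⟨((continuous_abs.measurable.comp hw.1).aemeasurable.pow hqm).aestronglyMeasurable, ?_⟩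
      rw [hasFiniteIntegral_iff_ofReal]
      · exact hqint w hw
      · exact Eventually.of_forall fun x => Real.rpow_nonneg (abs_nonneg _) _
    refine aux_gen (volume.restrict Ω) f ?_ hfcont u v
      (fun x => c₁ * (2 ^ C * (|u x| ^ q x + |v x| ^ q x))) hum hvm
      ((((hint u ⟨hum, hun⟩).add (hint v ⟨hvm, hvn⟩)).const_mul _).const_mul _) ?_
    · have h := measurable_uncurry_of_continuous_of_measurable (u := fun (t : ℝ) x => f x t)
        hfcont hfmeas
      exact h.comp measurable_swap
    · filter_upwards [ae_restrict_mem hΩo.measurableSet] with x hx τ hτ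
      have hq := hq1 x (subset_closure hx)
      have hM : 0 ≤ |u x| + |v x| := by positivity
      calc |f x τ| * (|u x| + |v x|)
          ≤ (c₁ * (|u x| + |v x|) ^ (q x - 1)) * (|u x| + |v x|) := by
            gcongr
            refine (hf x hx τ).trans ?_
            gcongr
        _ = c₁ * (|u x| + |v x|) ^ q x := by
            rw [mul_assoc]
            congr 1
            conv_rhs => rw [show q x = (q x - 1) + 1 by ring]
            rw [Real.rpow_add_one' hM (by linarith)]
        _ ≤ _ := by
            gcongr
            exact aux_rpow_add _ _ _ _ (abs_nonneg _) (abs_nonneg _) (by linarith)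
              (hC x (subset_closure hx))
  have hJ := (((hQ.const_mul (1/2 : ℝ)).add hO).add hB).sub (hF.const_mul lam)
  have hT := hJ.tendsto_slope_zero
  refine hT.congr fun t => ?_
  simp [Jlam, div_eq_inv_mul]
end
end

section
/- Assume (Φ1), (Φ2), (Φ3), the symmetry a(x,y,t) = a(y,x,t), the growth conditions (f₁): |f(x,t)| ≤ c₁|t|^{q(x)−1} and (f₂): F(x,t) ≥ c₂|t|^{q(x)} with constants c₁, c₂ > 0, and q⁺ < φ⁻. Assume furthermore the continuous embedding: there is c > 0 with ‖u‖_{q(·)} ≤ c·‖u‖ for all u ∈ X, and the compact embedding: every sequence (u_n) ⊂ X with sup_n ‖u_n‖ < ∞ admits a subsequence (u_{n_k}) and u ∈ X with ∫_Ω |u_{n_k}(x) − u(x)|^{q(x)} dx → 0. Then there exists λ_* > 0 such that for every λ ∈ (0, λ_*) there is u ∈ X with u not almost everywhere 0, J_λ(u) < 0, and A_s(u,v) = λ·∫_Ω f(x,u(x))·v(x) dx for every v ∈ X (i.e., u is a nontrivial weak solution of the Neumann–Robin problem (𝒫_a)). -/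
open MeasureTheory Set Filter
open scoped ENNReal

noncomputable section

variable {N : ℕ}

/-- bundled structural hypotheses on `a`. -/
structure HypA (a : Eucl N → Eucl N → ℝ → ℝ) (φm φp : ℝ) : Prop where
  ha : Measurable fun p : Eucl N × Eucl N × ℝ => a p.1 p.2.1 p.2.2
  hmono : ∀ x y, StrictMono (phiF a x y)
  hcont : ∀ x y, Continuous (phiF a x y)
  hφm : 1 < φm
  hφmp : φm ≤ φp
  hΦ1 : ∀ x y t, 0 < t →
      φm ≤ t * phiF a x y t / PhiF a x y t ∧ t * phiF a x y t / PhiF a x y t ≤ φp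
  hΦ2 : ∀ x y : Eucl N, ConvexOn ℝ (Set.Ici 0) fun t => PhiF a x y (Real.sqrt t)
  hΦ3 : ∃ C : ℝ, ∀ x y : Eucl N, PhiF a x y 1 ≤ C

namespace HypA

variable {a : Eucl N → Eucl N → ℝ → ℝ} {φm φp : ℝ}

lemma phi_zero (a : Eucl N → Eucl N → ℝ → ℝ) (x y : Eucl N) : phiF a x y 0 = 0 := by simp [phiF]

lemma phi_neg (a : Eucl N → Eucl N → ℝ → ℝ) (x y : Eucl N) (t : ℝ) :
    phiF a x y (-t) = - phiF a x y t := by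
  unfold phiF; by_cases h : t = 0 <;> simp [h]

lemma Phi_zero (a : Eucl N → Eucl N → ℝ → ℝ) (x y : Eucl N) : PhiF a x y 0 = 0 := by simp [PhiF]

lemma Phi_neg (a : Eucl N → Eucl N → ℝ → ℝ) (x y : Eucl N) (t : ℝ) :
    PhiF a x y (-t) = PhiF a x y t := by
  unfold PhiF
  have h := intervalIntegral.integral_comp_neg (a := 0) (b := t) (fun τ => phiF a x y τ)
  simp only [phi_neg, intervalIntegral.integral_neg, neg_zero] at h
  rw [intervalIntegral.integral_symm (-t) 0, ← h, neg_neg]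

lemma Phi_abs (a : Eucl N → Eucl N → ℝ → ℝ) (x y : Eucl N) (t : ℝ) :
    PhiF a x y |t| = PhiF a x y t := by
  rcases abs_choice t with h | h <;> rw [h]
  exact Phi_neg a x y t

lemma phi_pos (H : HypA a φm φp) (x y : Eucl N) {t : ℝ} (ht : 0 < t) : 0 < phiF a x y t := by
  have := H.hmono x y ht
  rwa [phi_zero] at this

lemma hasDeriv (H : HypA a φm φp) (x y : Eucl N) (t : ℝ) :
    HasDerivAt (PhiF a x y) (phiF a x y t) t :=
  intervalIntegral.integral_hasDerivAt_right ((H.hcont x y).intervalIntegrable _ _)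
    ((H.hcont x y).stronglyMeasurableAtFilter _ _) (H.hcont x y).continuousAt

lemma Phi_cont (H : HypA a φm φp) (x y : Eucl N) : Continuous (PhiF a x y) :=
  continuous_iff_continuousAt.2 fun t => (H.hasDeriv x y t).continuousAt

lemma Phi_strictMonoOn (H : HypA a φm φp) (x y : Eucl N) : StrictMonoOn (PhiF a x y) (Ici 0) := by
  apply strictMonoOn_of_deriv_pos (convex_Ici 0) (H.Phi_cont x y).continuousOn
  intro t ht
  rw [interior_Ici] at ht
  rw [(H.hasDeriv x y t).deriv]
  exact H.phi_pos x y ht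

lemma Phi_pos (H : HypA a φm φp) (x y : Eucl N) {t : ℝ} (ht : 0 < t) : 0 < PhiF a x y t := by
  have := H.Phi_strictMonoOn x y (mem_Ici.2 le_rfl) (mem_Ici.2 ht.le) ht
  rwa [Phi_zero] at this

lemma Phi_nonneg (H : HypA a φm φp) (x y : Eucl N) (t : ℝ) : 0 ≤ PhiF a x y t := by
  rw [← Phi_abs]
  rcases (abs_nonneg t).eq_or_lt with h | h
  · rw [← h, Phi_zero]
  · exact (H.Phi_pos x y h).le

lemma Phi_mono (H : HypA a φm φp) (x y : Eucl N) {r t : ℝ} (h : |r| ≤ |t|) :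
    PhiF a x y r ≤ PhiF a x y t := by
  rw [← Phi_abs a x y r, ← Phi_abs a x y t]
  exact (H.Phi_strictMonoOn x y).monotoneOn (mem_Ici.2 (abs_nonneg _)) (mem_Ici.2 (abs_nonneg _)) h

lemma tphi_le (H : HypA a φm φp) (x y : Eucl N) {t : ℝ} (ht : 0 ≤ t) :
    t * phiF a x y t ≤ φp * PhiF a x y t := by
  rcases ht.eq_or_lt with h | h
  · simp [← h, Phi_zero]
  · exact (div_le_iff₀ (H.Phi_pos x y h)).1 (H.hΦ1 x y t h).2

lemma le_tphi (H : HypA a φm φp) (x y : Eucl N) {t : ℝ} (ht : 0 ≤ t) :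
    φm * PhiF a x y t ≤ t * phiF a x y t := by
  rcases ht.eq_or_lt with h | h
  · simp [← h, Phi_zero]
  · exact (le_div_iff₀ (H.Phi_pos x y h)).1 (H.hΦ1 x y t h).1

lemma hasDeriv_scaled (H : HypA a φm φp) (x y : Eucl N) (p : ℝ) {t : ℝ} (ht : 0 < t) :
    HasDerivAt (fun r => PhiF a x y r * r ^ (-p))
      (t ^ (-p - 1) * (t * phiF a x y t - p * PhiF a x y t)) t := by
  have h := (H.hasDeriv x y t).mul (Real.hasDerivAt_rpow_const (x := t) (p := -p) (Or.inl ht.ne'))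
  refine h.congr_deriv ?_
  have : t ^ (-p) = t ^ (-p - 1) * t := by
    rw [← Real.rpow_add_one ht.ne']; ring_nf
  rw [this]; ring

lemma Phi_scale_up (H : HypA a φm φp) (x y : Eucl N) {c : ℝ} (hc : 1 ≤ c) (t : ℝ) :
    PhiF a x y (c * t) ≤ c ^ φp * PhiF a x y t := by
  rw [← Phi_abs a x y (c * t), ← Phi_abs a x y t, abs_mul, abs_of_pos (by linarith : 0 < c)]
  rcases (abs_nonneg t).eq_or_lt with h | h
  · simp [← h, Phi_zero]
  generalize |t| = t at h ⊢
  have hc0 : 0 < c := by linarith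
  have hanti : AntitoneOn (fun r => PhiF a x y r * r ^ (-φp)) (Ioi 0) := by
    apply antitoneOn_of_deriv_nonpos (convex_Ioi 0)
    · exact fun r hr => (H.hasDeriv_scaled x y φp hr).continuousAt.continuousWithinAt
    · rw [interior_Ioi]
      exact fun r hr => (H.hasDeriv_scaled x y φp hr).differentiableAt.differentiableWithinAt
    · rw [interior_Ioi]
      intro r hr
      have hr' : 0 < r := hr
      rw [(H.hasDeriv_scaled x y φp hr').deriv]
      have := H.tphi_le x y hr'.le
      exact mul_nonpos_of_nonneg_of_nonpos (by positivity) (by linarith)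
  have h1 := hanti (mem_Ioi.2 h) (mem_Ioi.2 (by positivity : 0 < c * t))
    (by nlinarith)
  simp only at h1
  rw [Real.rpow_neg (by positivity), Real.rpow_neg h.le, Real.mul_rpow hc0.le h.le,
    ← div_eq_mul_inv, ← div_eq_mul_inv, div_le_div_iff₀ (by positivity) (by positivity)] at h1
  have h2 : (0:ℝ) < t ^ φp := by positivity
  nlinarith

lemma Phi_scale_down (H : HypA a φm φp) (x y : Eucl N) {c : ℝ} (hc0 : 0 ≤ c) (hc : c ≤ 1) (t : ℝ) :
    PhiF a x y (c * t) ≤ c ^ φm * PhiF a x y t := by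
  rcases hc0.eq_or_lt with h0 | hc0
  · have : φm ≠ 0 := by linarith [H.hφm]
    simp [← h0, Phi_zero, Real.zero_rpow this]
  rw [← Phi_abs a x y (c * t), ← Phi_abs a x y t, abs_mul, abs_of_pos hc0]
  rcases (abs_nonneg t).eq_or_lt with h | h
  · simp [← h, Phi_zero]
  generalize |t| = t at h ⊢
  have hmon : MonotoneOn (fun r => PhiF a x y r * r ^ (-φm)) (Ioi 0) := by
    apply monotoneOn_of_deriv_nonneg (convex_Ioi 0)
    · exact fun r hr => (H.hasDeriv_scaled x y φm hr).continuousAt.continuousWithinAt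
    · rw [interior_Ioi]
      exact fun r hr => (H.hasDeriv_scaled x y φm hr).differentiableAt.differentiableWithinAt
    · rw [interior_Ioi]
      intro r hr
      have hr' : 0 < r := hr
      rw [(H.hasDeriv_scaled x y φm hr').deriv]
      have := H.le_tphi x y hr'.le
      exact mul_nonneg (by positivity) (by linarith)
  have h1 := hmon (mem_Ioi.2 (by positivity : 0 < c * t)) (mem_Ioi.2 h) 
    (by nlinarith)
  simp only at h1
  rw [Real.rpow_neg (by positivity), Real.rpow_neg h.le, Real.mul_rpow hc0.le h.le,
    ← div_eq_mul_inv, ← div_eq_mul_inv, div_le_div_iff₀ (by positivity) (by positivity)] at h1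
  have h2 : (0:ℝ) < t ^ φm := by positivity
  nlinarith

lemma Phi_add_le (H : HypA a φm φp) (x y : Eucl N) (r t : ℝ) :
    PhiF a x y (|r| + |t|) ≤ 2 ^ φp * (PhiF a x y r + PhiF a x y t) := by
  have h0 : (0:ℝ) < 2 ^ φp := by positivity
  have hr := H.Phi_nonneg x y r
  have ht := H.Phi_nonneg x y t
  have key : ∀ m : ℝ, |r| ≤ |m| → |t| ≤ |m| →
      PhiF a x y (|r| + |t|) ≤ 2 ^ φp * PhiF a x y m := by
    intro m h1 h2
    refine le_trans (H.Phi_mono x y (t := 2 * m) ?_) (H.Phi_scale_up x y (by norm_num) m)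
    rw [abs_of_nonneg (by positivity : 0 ≤ |r| + |t|), abs_mul, abs_two]; linarith
  rcases le_total |r| |t| with h | h
  · have := key t h le_rfl; nlinarith
  · have := key r le_rfl h; nlinarith

/-- domination of the derivative of the energy density -/
lemma phi_bound (H : HypA a φm φp) (x y : Eucl N) (r t : ℝ) {e : ℝ} (he : |e| ≤ 1) :
    |phiF a x y (r + e * t) * t| ≤ φp * 2 ^ φp * (PhiF a x y r + PhiF a x y t) := by
  have h1 : |phiF a x y (r + e * t)| ≤ phiF a x y (|r| + |t|) := by
    have hb : |r + e * t| ≤ |r| + |t| := by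
      refine (abs_add_le _ _).trans ?_
      rw [abs_mul]; nlinarith [abs_nonneg t]
    obtain ⟨h2, h3⟩ := abs_le.1 hb
    rw [abs_le, ← phi_neg]
    exact ⟨(H.hmono x y).monotone h2, (H.hmono x y).monotone h3⟩
  have h4 : 0 ≤ phiF a x y (|r| + |t|) := (abs_nonneg _).trans h1
  have h5 := H.tphi_le x y (t := |r| + |t|) (by positivity)
  have h6 := H.Phi_add_le x y r t
  rw [abs_mul]
  have hp : 0 ≤ φp := by linarith [H.hφm, H.hφmp]
  calc |phiF a x y (r + e * t)| * |t| ≤ phiF a x y (|r| + |t|) * (|r| + |t|) := by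
        apply mul_le_mul h1 (by linarith [abs_nonneg r]) (abs_nonneg _) h4
    _ ≤ φp * PhiF a x y (|r| + |t|) := by linarith
    _ ≤ φp * (2 ^ φp * (PhiF a x y r + PhiF a x y t)) := mul_le_mul_of_nonneg_left h6 hp
    _ = _ := by ring

lemma clarkson (H : HypA a φm φp) (x y : Eucl N) (r t : ℝ) :
    PhiF a x y ((r + t) / 2) + PhiF a x y ((r - t) / 2) ≤ (PhiF a x y r + PhiF a x y t) / 2 := by
  have hc := H.hΦ2 x y
  have hc2 : ∀ A B p q : ℝ, 0 ≤ A → 0 ≤ B → 0 ≤ p → 0 ≤ q → p + q = 1 →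
      PhiF a x y (Real.sqrt (p * A + q * B)) ≤ p * PhiF a x y (Real.sqrt A)
        + q * PhiF a x y (Real.sqrt B) :=
    fun A B p q hA hB hp hq hpq => hc.2 (mem_Ici.2 hA) (mem_Ici.2 hB) hp hq hpq
  set h : ℝ → ℝ := fun t => PhiF a x y (Real.sqrt t) with hh
  have hsq : ∀ t, PhiF a x y t = h (t ^ 2) := by
    intro t; simp only [hh, Real.sqrt_sq_eq_abs, Phi_abs]
  have h0 : h 0 = 0 := by simp [hh, Phi_zero]
  have hsuper : ∀ A B : ℝ, 0 ≤ A → 0 ≤ B → h A + h B ≤ h (A + B) := by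
    intro A B hA hB
    rcases (add_nonneg hA hB).eq_or_lt with hs | hs
    · have hA0 : A = 0 := by linarith
      have hB0 : B = 0 := by linarith
      simp [hA0, hB0, h0]
    have e1 := hc2 (A + B) 0 (A / (A + B)) (B / (A + B)) hs.le le_rfl
      (by positivity) (by positivity) (by field_simp)
    have e2 := hc2 (A + B) 0 (B / (A + B)) (A / (A + B)) hs.le le_rfl
      (by positivity) (by positivity) (by field_simp; ring)
    change h _ ≤ _ * h _ + _ * h _ at e1
    change h _ ≤ _ * h _ + _ * h _ at e2
    simp only [mul_zero, add_zero, h0] at e1 e2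
    rw [div_mul_cancel₀ _ hs.ne'] at e1 e2
    have : A / (A + B) * h (A + B) + B / (A + B) * h (A + B) = h (A + B) := by field_simp
    linarith
  rw [hsq, hsq, hsq r, hsq t]
  refine (hsuper _ _ (sq_nonneg _) (sq_nonneg _)).trans ?_
  have e := hc2 (r ^ 2) (t ^ 2) (1/2) (1/2) (sq_nonneg _) (sq_nonneg _)
    (by norm_num) (by norm_num) (by norm_num)
  change h _ ≤ _ * h _ + _ * h _ at e
  have e3 : ((r + t) / 2) ^ 2 + ((r - t) / 2) ^ 2 = 1 / 2 * r ^ 2 + 1 / 2 * t ^ 2 := by ring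
  rw [e3]
  linarith

lemma phi_meas (H : HypA a φm φp) :
    Measurable fun z : (Eucl N × Eucl N) × ℝ => phiF a z.1.1 z.1.2 z.2 := by
  unfold phiF
  refine Measurable.ite (measurableSet_eq_fun (by fun_prop) (by fun_prop)) measurable_const ?_
  refine Measurable.mul ?_ (by fun_prop)
  exact H.ha.comp (g := fun p : Eucl N × Eucl N × ℝ => a p.1 p.2.1 p.2.2)
    (f := fun z : (Eucl N × Eucl N) × ℝ => (z.1.1, z.1.2, |z.2|)) (by fun_prop)

end HypA

lemma primitive_meas {Y : Type*} [MeasurableSpace Y] (g : Y → ℝ → ℝ)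
    (hg : Measurable (Function.uncurry g)) (hc : ∀ y, Continuous (g y)) :
    Measurable fun z : Y × ℝ => ∫ τ in (0:ℝ)..z.2, g z.1 τ := by
  have h1 : ∀ t : ℝ, Measurable fun y : Y => ∫ τ in (0:ℝ)..t, g y τ := by
    intro t
    simp only [intervalIntegral]
    apply Measurable.sub
    · exact (hg.stronglyMeasurable.integral_prod_right (ν := volume.restrict (Ioc 0 t))).measurable
    · exact (hg.stronglyMeasurable.integral_prod_right (ν := volume.restrict (Ioc t 0))).measurable
  have h2 := measurable_uncurry_of_continuous_of_measurable
    (u := fun (t : ℝ) (y : Y) => ∫ τ in (0:ℝ)..t, g y τ)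
    (fun y => by
      refine continuous_iff_continuousAt.2 fun t => ?_
      exact (intervalIntegral.integral_hasDerivAt_right ((hc y).intervalIntegrable _ _)
        ((hc y).stronglyMeasurableAtFilter _ _) (hc y).continuousAt).continuousAt) h1
  exact h2.comp measurable_swap

lemma HypA.Phi_meas {a : Eucl N → Eucl N → ℝ → ℝ} {φm φp : ℝ} (H : HypA a φm φp) :
    Measurable fun z : (Eucl N × Eucl N) × ℝ => PhiF a z.1.1 z.1.2 z.2 :=
  primitive_meas (fun p : Eucl N × Eucl N => phiF a p.1 p.2) H.phi_meas (fun _ => H.hcont _ _)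

/-- unified difference operator: `D^s u` off the diagonal, `u` on the diagonal. -/
def Tu (s : ℝ) (u : Eucl N → ℝ) (p : Eucl N × Eucl N) : ℝ :=
  if p.1 = p.2 then u p.1 else Du s u p

def MuQ (Ω : Set (Eucl N)) : Measure (Eucl N × Eucl N) :=
  (volume.restrict (Qset Ω)).withDensity
    (fun p => ENNReal.ofReal ((1/2) / dist p.1 p.2 ^ (N : ℝ)))

def MuO (Ω : Set (Eucl N)) : Measure (Eucl N × Eucl N) :=
  Measure.map (fun x => (x, x)) (volume.restrict Ω)

def MuB (Ω : Set (Eucl N)) (β : Eucl N → ℝ) : Measure (Eucl N × Eucl N) :=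
  Measure.map (fun x => (x, x)) ((volume.restrict Ωᶜ).withDensity (fun x => ENNReal.ofReal (β x)))

/-- unified measure on `E × E`. -/
def Mu (Ω : Set (Eucl N)) (β : Eucl N → ℝ) : Measure (Eucl N × Eucl N) :=
  MuQ Ω + MuO Ω + MuB Ω β

/-- convex part of the energy. -/
def Imod (a : Eucl N → Eucl N → ℝ → ℝ) (s : ℝ) (Ω : Set (Eucl N)) (β : Eucl N → ℝ)
    (u : Eucl N → ℝ) : ℝ≥0∞ :=
  ∫⁻ p, ENNReal.ofReal (PhiF a p.1 p.2 (Tu s u p)) ∂(Mu Ω β)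

lemma Tu_meas (s : ℝ) {u : Eucl N → ℝ} (hu : Measurable u) : Measurable (Tu s u) := by
  unfold Tu Du
  refine Measurable.ite (measurableSet_eq_fun (by fun_prop) (by fun_prop)) (by fun_prop) ?_
  fun_prop

lemma Tu_add (s : ℝ) (u v : Eucl N → ℝ) (p) : Tu s (fun x => u x + v x) p = Tu s u p + Tu s v p := by
  unfold Tu Du; split_ifs <;> ring

lemma Tu_smul (s : ℝ) (c : ℝ) (u : Eucl N → ℝ) (p) : Tu s (fun x => c * u x) p = c * Tu s u p := by
  unfold Tu Du; split_ifs <;> ring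

lemma Tu_diag (s : ℝ) (u : Eucl N → ℝ) (x) : Tu s u (x, x) = u x := by simp [Tu]

lemma diag_meas : Measurable (fun x : Eucl N => (x, x)) := by fun_prop

lemma dens_meas : Measurable (fun p : Eucl N × Eucl N => ENNReal.ofReal ((1/2) / dist p.1 p.2 ^ (N : ℝ))) := by
  fun_prop

section
variable {a : Eucl N → Eucl N → ℝ → ℝ} {φm φp : ℝ} {s : ℝ} {Ω : Set (Eucl N)} {β : Eucl N → ℝ}

lemma HypA.PhiT_meas (H : HypA a φm φp) {g : Eucl N × Eucl N → ℝ} (hg : Measurable g) :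
    Measurable fun p : Eucl N × Eucl N => PhiF a p.1 p.2 (g p) :=
  H.Phi_meas.comp (g := fun z : (Eucl N × Eucl N) × ℝ => PhiF a z.1.1 z.1.2 z.2)
    (f := fun p => (p, g p)) (by fun_prop)

lemma HypA.phiT_meas (H : HypA a φm φp) {g : Eucl N × Eucl N → ℝ} (hg : Measurable g) :
    Measurable fun p : Eucl N × Eucl N => phiF a p.1 p.2 (g p) :=
  H.phi_meas.comp (g := fun z : (Eucl N × Eucl N) × ℝ => phiF a z.1.1 z.1.2 z.2)
    (f := fun p => (p, g p)) (by fun_prop)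

lemma Imod_eq (H : HypA a φm φp) (hN : 1 ≤ N) (hβm : Measurable β) {u : Eucl N → ℝ}
    (hu : Measurable u) :
    Imod a s Ω β u = ENNReal.ofReal (1/2) * modQ a s Ω u 1 + modO a Ω u 1 + modB a Ω β u 1 := by
  have hm : Measurable fun p : Eucl N × Eucl N => ENNReal.ofReal (PhiF a p.1 p.2 (Tu s u p)) :=
    (H.PhiT_meas (Tu_meas s hu)).ennreal_ofReal
  unfold Imod Mu
  rw [lintegral_add_measure, lintegral_add_measure]
  congr 1
  · congr 1
    · unfold MuQ modQ
      rw [lintegral_withDensity_eq_lintegral_mul _ dens_meas hm, ← lintegral_const_mul']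
      · refine lintegral_congr fun p => ?_
        simp only [Pi.mul_apply]
        rw [← ENNReal.ofReal_mul' (H.Phi_nonneg _ _ _), ← ENNReal.ofReal_mul (by norm_num)]
        congr 1
        by_cases hp : p.1 = p.2
        · have : (N : ℝ) ≠ 0 := by positivity
          simp [hp, Real.zero_rpow this]
        · rw [Tu, if_neg hp, one_mul, Du]
          have : |u p.1 - u p.2| / dist p.1 p.2 ^ s = |(u p.1 - u p.2) / dist p.1 p.2 ^ s| := by
            rw [abs_div, abs_of_nonneg (by positivity : 0 ≤ dist p.1 p.2 ^ s)]
          rw [this, HypA.Phi_abs]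
          ring
      · exact ENNReal.ofReal_ne_top
    · unfold MuO modO
      rw [lintegral_map hm diag_meas]
      simp [Tu_diag, HypA.Phi_abs]
  · unfold MuB modB
    rw [lintegral_map hm diag_meas]
    refine (lintegral_withDensity_eq_lintegral_mul (volume.restrict Ωᶜ)
      (f := fun x => ENNReal.ofReal (β x)) (by fun_prop) (hm.comp diag_meas)).trans ?_
    refine lintegral_congr fun x => ?_
    simp only [Pi.mul_apply, Function.comp, Tu_diag, div_one, HypA.Phi_abs]
    rw [ENNReal.ofReal_mul' (H.Phi_nonneg _ _ _)]

lemma Imod_le_rho (H : HypA a φm φp) (hN : 1 ≤ N) (hβm : Measurable β) {u : Eucl N → ℝ}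
    (hu : Measurable u) : Imod a s Ω β u ≤ rhoS a s Ω β u := by
  rw [Imod_eq H hN hβm hu, rhoS]
  gcongr
  calc _ ≤ 1 * modQ a s Ω u 1 := by
        gcongr
        rw [ENNReal.ofReal_le_one]; norm_num
    _ = _ := one_mul _

lemma rho_le_Imod (H : HypA a φm φp) (hN : 1 ≤ N) (hβm : Measurable β) {u : Eucl N → ℝ}
    (hu : Measurable u) : rhoS a s Ω β u ≤ ENNReal.ofReal 2 * Imod a s Ω β u := by
  rw [Imod_eq H hN hβm hu, rhoS, mul_add, mul_add, ← mul_assoc, ← ENNReal.ofReal_mul (by norm_num)]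
  have h1 : ∀ z : ℝ≥0∞, z ≤ ENNReal.ofReal 2 * z := by
    intro z
    calc z = 1 * z := (one_mul z).symm
      _ ≤ _ := by gcongr; rw [ENNReal.one_le_ofReal]; norm_num
  gcongr
  · norm_num
  · exact h1 _
  · exact h1 _

lemma Imod_scale_up (H : HypA a φm φp) {c : ℝ} (hc : 1 ≤ c) (u : Eucl N → ℝ) :
    Imod a s Ω β (fun x => c * u x) ≤ ENNReal.ofReal (c ^ φp) * Imod a s Ω β u := by
  unfold Imod
  rw [← lintegral_const_mul' _ _ ENNReal.ofReal_ne_top]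
  refine lintegral_mono fun p => ?_
  rw [← ENNReal.ofReal_mul (by positivity), Tu_smul]
  exact ENNReal.ofReal_le_ofReal (H.Phi_scale_up _ _ hc _)

lemma Imod_scale_down (H : HypA a φm φp) {c : ℝ} (hc0 : 0 ≤ c) (hc : c ≤ 1) (u : Eucl N → ℝ) :
    Imod a s Ω β (fun x => c * u x) ≤ ENNReal.ofReal (c ^ φm) * Imod a s Ω β u := by
  unfold Imod
  rw [← lintegral_const_mul' _ _ ENNReal.ofReal_ne_top]
  refine lintegral_mono fun p => ?_
  rw [← ENNReal.ofReal_mul (by positivity), Tu_smul]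
  exact ENNReal.ofReal_le_ofReal (H.Phi_scale_down _ _ hc0 hc _)

/-- the key bound of the norm by the modular -/
lemma norm_bound (H : HypA a φm φp) (hN : 1 ≤ N) (hβm : Measurable β) {u : Eucl N → ℝ}
    (hu : Measurable u) {K : ℝ} (hK : 1 ≤ K) (hI : ENNReal.ofReal 2 * Imod a s Ω β u ≤ ENNReal.ofReal K) :
    normM a s Ω β u ≤ ENNReal.ofReal (K ^ (1 / φm)) := by
  have hm : 0 < φm := by linarith [H.hφm]
  have hK0 : 0 < K := by linarith
  unfold normM
  refine sInf_le ⟨K ^ (1 / φm), by positivity, rfl, ?_⟩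
  have h1 : 1 ≤ K ^ (1 / φm) := Real.one_le_rpow hK (by positivity)
  have h2 : (fun x => u x / K ^ (1 / φm)) = fun x => (K ^ (1 / φm))⁻¹ * u x := by
    ext x; rw [div_eq_inv_mul]
  rw [h2]
  refine (rho_le_Imod H hN hβm (by fun_prop)).trans ?_
  have h3 := Imod_scale_down (s := s) (Ω := Ω) (β := β) H (c := (K ^ (1 / φm))⁻¹) (by positivity) (inv_le_one_of_one_le₀ h1) u
  have h4 : ((K ^ (1 / φm))⁻¹) ^ φm = K⁻¹ := by
    rw [Real.inv_rpow (by positivity), ← Real.rpow_mul hK0.le, one_div_mul_cancel hm.ne', Real.rpow_one]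
  rw [h4] at h3
  calc ENNReal.ofReal 2 * Imod a s Ω β (fun x => (K ^ (1 / φm))⁻¹ * u x)
      ≤ ENNReal.ofReal 2 * (ENNReal.ofReal K⁻¹ * Imod a s Ω β u) := by gcongr
    _ = ENNReal.ofReal K⁻¹ * (ENNReal.ofReal 2 * Imod a s Ω β u) := by ring
    _ ≤ ENNReal.ofReal K⁻¹ * ENNReal.ofReal K := by gcongr
    _ = 1 := by rw [← ENNReal.ofReal_mul (by positivity), inv_mul_cancel₀ hK0.ne', ENNReal.ofReal_one]

lemma mem_X_iff (H : HypA a φm φp) (hN : 1 ≤ N) (hβm : Measurable β) {u : Eucl N → ℝ} :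
    u ∈ XsetM a s Ω β ↔ Measurable u ∧ Imod a s Ω β u < ⊤ := by
  constructor
  · rintro ⟨hu, ⟨l, hl, h⟩, -⟩
    refine ⟨hu, ?_⟩
    have h1 : Imod a s Ω β (fun x => u x / l) < ⊤ := (Imod_le_rho H hN hβm (by fun_prop)).trans_lt h
    have h2 : u = fun x => l * (u x / l) := by ext x; field_simp
    rcases le_total 1 l with hl1 | hl1
    · rw [h2]
      exact (Imod_scale_up H hl1 _).trans_lt (ENNReal.mul_lt_top ENNReal.ofReal_lt_top h1)
    · rw [h2]
      exact (Imod_scale_down H hl.le hl1 _).trans_lt (ENNReal.mul_lt_top ENNReal.ofReal_lt_top h1)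
  · rintro ⟨hu, hI⟩
    refine ⟨hu, ⟨1, one_pos, ?_⟩, ?_⟩
    · simp only [div_one]
      exact (rho_le_Imod H hN hβm hu).trans_lt (ENNReal.mul_lt_top ENNReal.ofReal_lt_top hI)
    · refine (norm_bound H hN hβm hu (K := max 1 (2 * (Imod a s Ω β u).toReal)) (le_max_left _ _) ?_).trans_lt ENNReal.ofReal_lt_top
      conv_lhs => rw [← ENNReal.ofReal_toReal hI.ne]
      rw [← ENNReal.ofReal_mul (by norm_num)]
      exact ENNReal.ofReal_le_ofReal (le_max_right _ _)

lemma Imod_add_lt_top (H : HypA a φm φp) {u v : Eucl N → ℝ} (hu : Measurable u)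
    (hIu : Imod a s Ω β u < ⊤) (hIv : Imod a s Ω β v < ⊤) :
    Imod a s Ω β (fun x => u x + v x) < ⊤ := by
  have : Imod a s Ω β (fun x => u x + v x) ≤
      ENNReal.ofReal (2 ^ φp) * (Imod a s Ω β u + Imod a s Ω β v) := by
    unfold Imod
    rw [← lintegral_add_left (H.PhiT_meas (Tu_meas s hu)).ennreal_ofReal,
      ← lintegral_const_mul' _ _ ENNReal.ofReal_ne_top]
    refine lintegral_mono fun p => ?_
    rw [← ENNReal.ofReal_add (H.Phi_nonneg _ _ _) (H.Phi_nonneg _ _ _), ← ENNReal.ofReal_mul (by positivity), Tu_add]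
    refine ENNReal.ofReal_le_ofReal (le_trans (H.Phi_mono _ _ ?_) (H.Phi_add_le _ _ _ _))
    exact (abs_add_le _ _).trans (le_abs_self _)
  exact this.trans_lt (ENNReal.mul_lt_top ENNReal.ofReal_lt_top (ENNReal.add_lt_top.2 ⟨hIu, hIv⟩))

lemma Imod_smul_lt_top (H : HypA a φm φp) {u : Eucl N → ℝ} (c : ℝ)
    (hIu : Imod a s Ω β u < ⊤) :
    Imod a s Ω β (fun x => c * u x) < ⊤ := by
  have h1 : Imod a s Ω β (fun x => c * u x) ≤ Imod a s Ω β (fun x => (1 + |c|) * u x) := by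
    unfold Imod
    refine lintegral_mono fun p => ENNReal.ofReal_le_ofReal (H.Phi_mono _ _ ?_)
    rw [Tu_smul, Tu_smul, abs_mul, abs_mul, abs_of_nonneg (by positivity : 0 ≤ 1 + |c|)]
    gcongr
    linarith
  exact h1.trans_lt ((Imod_scale_up H (by linarith [abs_nonneg c]) _).trans_lt
    (ENNReal.mul_lt_top ENNReal.ofReal_lt_top hIu))

lemma X_lin (H : HypA a φm φp) (hN : 1 ≤ N) (hβm : Measurable β) {u v : Eucl N → ℝ}
    (hu : u ∈ XsetM a s Ω β) (hv : v ∈ XsetM a s Ω β) (c d : ℝ) :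
    (fun x => c * u x + d * v x) ∈ XsetM a s Ω β := by
  rw [mem_X_iff H hN hβm] at *
  obtain ⟨hu, hIu⟩ := hu
  obtain ⟨hv, hIv⟩ := hv
  exact ⟨by fun_prop, Imod_add_lt_top H (by fun_prop) (Imod_smul_lt_top H c hIu) (Imod_smul_lt_top H d hIv)⟩

lemma Imod_clarkson (H : HypA a φm φp) {u v : Eucl N → ℝ} (hu : Measurable u) (hv : Measurable v)
    (hIu : Imod a s Ω β u < ⊤) (hIv : Imod a s Ω β v < ⊤) :
    (Imod a s Ω β (fun x => (1/2) * u x + (1/2) * v x)).toReal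
      + (Imod a s Ω β (fun x => (1/2) * u x + (-1/2) * v x)).toReal
      ≤ ((Imod a s Ω β u).toReal + (Imod a s Ω β v).toReal) / 2 := by
  have key : Imod a s Ω β (fun x => (1/2) * u x + (1/2) * v x)
      + Imod a s Ω β (fun x => (1/2) * u x + (-1/2) * v x)
      ≤ ENNReal.ofReal (1/2) * (Imod a s Ω β u + Imod a s Ω β v) := by
    unfold Imod
    rw [← lintegral_add_left (H.PhiT_meas (Tu_meas s hu)).ennreal_ofReal,
      ← lintegral_add_left (H.PhiT_meas (Tu_meas s (by fun_prop))).ennreal_ofReal,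
      ← lintegral_const_mul' _ _ ENNReal.ofReal_ne_top]
    refine lintegral_mono fun p => ?_
    rw [← ENNReal.ofReal_add (H.Phi_nonneg _ _ _) (H.Phi_nonneg _ _ _),
      ← ENNReal.ofReal_add (H.Phi_nonneg _ _ _) (H.Phi_nonneg _ _ _), ← ENNReal.ofReal_mul (by positivity)]
    refine ENNReal.ofReal_le_ofReal ?_
    have := H.clarkson p.1 p.2 (Tu s u p) (Tu s v p)
    rw [Tu_add, Tu_add, Tu_smul, Tu_smul, Tu_smul]
    have e1 : (Tu s u p + Tu s v p) / 2 = 1 / 2 * Tu s u p + 1 / 2 * Tu s v p := by ring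
    have e2 : (Tu s u p - Tu s v p) / 2 = 1 / 2 * Tu s u p + -1 / 2 * Tu s v p := by ring
    rw [e1, e2] at this
    linarith
  have h1 := ENNReal.toReal_mono (ENNReal.mul_lt_top ENNReal.ofReal_lt_top (ENNReal.add_lt_top.2 ⟨hIu, hIv⟩)).ne key
  have hfin := key.trans_lt (ENNReal.mul_lt_top ENNReal.ofReal_lt_top (ENNReal.add_lt_top.2 ⟨hIu, hIv⟩))
  rw [ENNReal.add_lt_top] at hfin
  rw [ENNReal.toReal_add hfin.1.ne hfin.2.ne, ENNReal.toReal_mul, ENNReal.toReal_add hIu.ne hIv.ne,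
    ENNReal.toReal_ofReal (by norm_num)] at h1
  linarith

lemma Jlam_eq (H : HypA a φm φp) (hN : 1 ≤ N) (hβm : Measurable β) {u : Eucl N → ℝ}
    (hu : u ∈ XsetM a s Ω β) (f : Eucl N → ℝ → ℝ) (lam : ℝ) :
    Jlam a s Ω β f lam u = (Imod a s Ω β u).toReal - lam * ∫ x in Ω, Ff f x (u x) := by
  rw [mem_X_iff H hN hβm] at hu
  have h := hu.2
  rw [Imod_eq H hN hβm hu.1] at h ⊢
  obtain ⟨h12, h3⟩ := ENNReal.add_lt_top.1 h
  obtain ⟨h1, h2⟩ := ENNReal.add_lt_top.1 h12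
  rw [ENNReal.toReal_add h12.ne h3.ne, ENNReal.toReal_add h1.ne h2.ne, ENNReal.toReal_mul,
    ENNReal.toReal_ofReal (by norm_num)]
  rfl

end

/-- bundled hypotheses on the reaction term. -/
structure HypF (Ω : Set (Eucl N)) (q : Eucl N → ℝ) (qp : ℝ) (f : Eucl N → ℝ → ℝ) (c₁ c₂ : ℝ) :
    Prop where
  hΩo : IsOpen Ω
  hqm : AEMeasurable q (volume.restrict Ω)
  hq1 : ∀ x ∈ Ω, 1 < q x
  hqp : ∀ x ∈ Ω, q x ≤ qp
  hqp1 : 1 < qp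
  hfmeas : ∀ t : ℝ, Measurable fun x => f x t
  hfcont : ∀ x : Eucl N, Continuous fun t => f x t
  hc₁ : 0 < c₁
  hc₂ : 0 < c₂
  hf1 : ∀ x ∈ Ω, ∀ t : ℝ, |f x t| ≤ c₁ * |t| ^ (q x - 1)
  hf2 : ∀ x ∈ Ω, ∀ t : ℝ, c₂ * |t| ^ q x ≤ Ff f x t

lemma young_pt {A B δ q qp : ℝ} (hA : 0 ≤ A) (hB : 0 ≤ B) (hδ : 0 < δ) (hδ1 : δ ≤ 1) (hq : 1 < q)
    (hqp : q ≤ qp) : A ^ (q - 1) * B ≤ δ * A ^ q + δ ^ (-qp) * B ^ q := by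
  have hx : ∀ C : ℝ, 0 ≤ C → C ^ (q - 1) * C = C ^ q := by
    intro C hC
    have := Real.rpow_add_one' hC (y := q - 1) (by linarith)
    rw [← this]; ring_nf
  rcases le_total B (δ * A) with h | h
  · calc A ^ (q - 1) * B ≤ A ^ (q - 1) * (δ * A) := by gcongr
      _ = δ * (A ^ (q - 1) * A) := by ring
      _ = δ * A ^ q := by rw [hx A hA]
      _ ≤ _ := by have : 0 ≤ δ ^ (-qp) * B ^ q := by positivity
                  linarith
  · have h1 : A ≤ B / δ := by rw [le_div_iff₀ hδ]; linarith
    calc A ^ (q - 1) * B ≤ (B / δ) ^ (q - 1) * B := by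
          gcongr
      _ = δ ^ (-(q - 1)) * (B ^ (q - 1) * B) := by
          rw [Real.div_rpow hB hδ.le, Real.rpow_neg hδ.le]; ring
      _ = δ ^ (-(q - 1)) * B ^ q := by rw [hx B hB]
      _ ≤ δ ^ (-qp) * B ^ q := by
          gcongr ?_ * _
          exact Real.rpow_le_rpow_of_exponent_ge hδ hδ1 (by linarith)
      _ ≤ _ := by have : 0 ≤ δ * A ^ q := by positivity
                  linarith

lemma add_rpow_pt {A B q qp : ℝ} (hA : 0 ≤ A) (hB : 0 ≤ B) (hq : 1 < q) (hqp : q ≤ qp) :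
    (A + B) ^ q ≤ 2 ^ qp * (A ^ q + B ^ q) := by
  have h2 : (2:ℝ) ^ q ≤ 2 ^ qp := Real.rpow_le_rpow_of_exponent_le (by norm_num) hqp
  have hA' : 0 ≤ A ^ q := by positivity
  have hB' : 0 ≤ B ^ q := by positivity
  have key : ∀ C : ℝ, 0 ≤ C → A ≤ C → B ≤ C → (A + B) ^ q ≤ 2 ^ qp * C ^ q := by
    intro C hC h1 h3
    calc (A + B) ^ q ≤ (2 * C) ^ q := by
          gcongr
          linarith
      _ = 2 ^ q * C ^ q := Real.mul_rpow (by norm_num) hC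
      _ ≤ _ := by gcongr
  have hp : (0:ℝ) < 2 ^ qp := by positivity
  rcases le_total A B with h | h
  · have := key B hB h le_rfl; nlinarith
  · have := key A hA le_rfl h; nlinarith

namespace HypF
variable {Ω : Set (Eucl N)} {q : Eucl N → ℝ} {qp : ℝ} {f : Eucl N → ℝ → ℝ} {c₁ c₂ : ℝ}

lemma aeΩ (H : HypF Ω q qp f c₁ c₂) : ∀ᵐ x ∂(volume.restrict Ω), x ∈ Ω :=
  ae_restrict_mem H.hΩo.measurableSet

lemma pow_meas (H : HypF Ω q qp f c₁ c₂) {u : Eucl N → ℝ} (hu : Measurable u) :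
    AEStronglyMeasurable (fun x => |u x| ^ q x) (volume.restrict Ω) :=
  ((hu.abs.aemeasurable).pow H.hqm).aestronglyMeasurable

lemma f_meas (H : HypF Ω q qp f c₁ c₂) : Measurable (Function.uncurry f) := by
  have := measurable_uncurry_of_continuous_of_measurable (u := fun (t : ℝ) (x : Eucl N) => f x t)
    H.hfcont H.hfmeas
  exact this.comp measurable_swap

lemma F_meas (H : HypF Ω q qp f c₁ c₂) {u : Eucl N → ℝ} (hu : Measurable u) :
    Measurable fun x => Ff f x (u x) :=
  (primitive_meas f H.f_meas H.hfcont).comp (f := fun x => (x, u x)) (by fun_prop)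

lemma fu_meas (H : HypF Ω q qp f c₁ c₂) {u : Eucl N → ℝ} (hu : Measurable u) :
    Measurable fun x => f x (u x) :=
  H.f_meas.comp (f := fun x => (x, u x)) (by fun_prop)

lemma F_deriv (H : HypF Ω q qp f c₁ c₂) (x : Eucl N) (t : ℝ) : HasDerivAt (Ff f x) (f x t) t :=
  intervalIntegral.integral_hasDerivAt_right ((H.hfcont x).intervalIntegrable _ _)
    ((H.hfcont x).stronglyMeasurableAtFilter _ _) (H.hfcont x).continuousAt

lemma F_diff (H : HypF Ω q qp f c₁ c₂) {x : Eucl N} (hx : x ∈ Ω) (r t : ℝ) :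
    |Ff f x r - Ff f x t| ≤ c₁ * ((|r| + |t|) ^ (q x - 1) * |r - t|) := by
  have hq := H.hq1 x hx
  have h1 : Ff f x r - Ff f x t = ∫ τ in t..r, f x τ := by
    unfold Ff
    rw [intervalIntegral.integral_interval_sub_left] <;> exact (H.hfcont x).intervalIntegrable _ _
  rw [h1, ← mul_assoc]
  refine intervalIntegral.norm_integral_le_of_norm_le_const (f := f x) fun τ hτ => ?_
  refine (H.hf1 x hx τ).trans ?_
  have hc := H.hc₁
  gcongr
  have h2 : |τ| ≤ max |r| |t| := by
    rw [uIoc, mem_Ioc] at hτ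
    have := abs_le_max_abs_abs hτ.1.le hτ.2
    refine this.trans (max_le ?_ ?_)
    · rcases min_choice t r with h | h <;> rw [h] <;> simp
    · rcases max_choice t r with h | h <;> rw [h] <;> simp
  exact h2.trans (max_le (by linarith [abs_nonneg t]) (by linarith [abs_nonneg r]))

lemma F_bound (H : HypF Ω q qp f c₁ c₂) {x : Eucl N} (hx : x ∈ Ω) (r : ℝ) :
    |Ff f x r| ≤ c₁ * |r| ^ q x := by
  have h := H.F_diff hx r 0
  have hq := H.hq1 x hx
  have h0 : Ff f x 0 = 0 := by simp [Ff]
  have := Real.rpow_add_one' (abs_nonneg r) (y := q x - 1) (by linarith)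
  rw [h0, sub_zero, sub_zero, abs_zero, add_zero, ← this] at h
  simpa using h

lemma F_int (H : HypF Ω q qp f c₁ c₂) {u : Eucl N → ℝ} (hu : Measurable u)
    (hI : IntegrableOn (fun x => |u x| ^ q x) Ω) : IntegrableOn (fun x => Ff f x (u x)) Ω := by
  refine Integrable.mono' (hI.const_mul c₁) (H.F_meas hu).aestronglyMeasurable ?_
  filter_upwards [H.aeΩ] with x hx
  exact H.F_bound hx _

lemma G_le (H : HypF Ω q qp f c₁ c₂) {u : Eucl N → ℝ} (hu : Measurable u)
    (hI : IntegrableOn (fun x => |u x| ^ q x) Ω) :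
    ∫ x in Ω, Ff f x (u x) ≤ c₁ * ∫ x in Ω, |u x| ^ q x := by
  rw [← integral_const_mul]
  refine integral_mono_ae (H.F_int hu hI) (hI.const_mul _) ?_
  filter_upwards [H.aeΩ] with x hx
  exact (le_abs_self _).trans (H.F_bound hx _)

lemma le_G (H : HypF Ω q qp f c₁ c₂) {u : Eucl N → ℝ} (hu : Measurable u)
    (hI : IntegrableOn (fun x => |u x| ^ q x) Ω) :
    c₂ * ∫ x in Ω, |u x| ^ q x ≤ ∫ x in Ω, Ff f x (u x) := by
  rw [← integral_const_mul]
  refine integral_mono_ae (hI.const_mul _) (H.F_int hu hI) ?_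
  filter_upwards [H.aeΩ] with x hx
  exact H.hf2 x hx _

lemma add_int (H : HypF Ω q qp f c₁ c₂) {u v : Eucl N → ℝ} (hu : Measurable u) (hv : Measurable v)
    (hIu : IntegrableOn (fun x => |u x| ^ q x) Ω) (hIv : IntegrableOn (fun x => |v x| ^ q x) Ω) :
    IntegrableOn (fun x => (|u x| + |v x|) ^ q x) Ω := by
  refine Integrable.mono' ((hIu.add hIv).const_mul (2 ^ qp))
    (((hu.abs.add hv.abs).aemeasurable).pow H.hqm).aestronglyMeasurable ?_
  filter_upwards [H.aeΩ] with x hx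
  rw [Real.norm_of_nonneg (by positivity)]
  exact add_rpow_pt (abs_nonneg _) (abs_nonneg _) (H.hq1 x hx) (H.hqp x hx)

lemma G_cont (H : HypF Ω q qp f c₁ c₂) {u v : Eucl N → ℝ} (hu : Measurable u) (hv : Measurable v)
    (hIu : IntegrableOn (fun x => |u x| ^ q x) Ω) (hIv : IntegrableOn (fun x => |v x| ^ q x) Ω)
    (hIw : IntegrableOn (fun x => |u x - v x| ^ q x) Ω)
    {δ : ℝ} (hδ : 0 < δ) (hδ1 : δ ≤ 1) :
    |(∫ x in Ω, Ff f x (u x)) - ∫ x in Ω, Ff f x (v x)| ≤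
      c₁ * (δ * (2 ^ qp * ((∫ x in Ω, |u x| ^ q x) + ∫ x in Ω, |v x| ^ q x))
        + δ ^ (-qp) * ∫ x in Ω, |u x - v x| ^ q x) := by
  have hc := H.hc₁
  rw [← integral_sub (H.F_int hu hIu) (H.F_int hv hIv), ← integral_add hIu hIv,
    ← integral_const_mul, ← integral_const_mul, ← integral_const_mul, ← integral_add, ← integral_const_mul]
  · refine (norm_integral_le_integral_norm (μ := volume.restrict Ω)
      (fun x => Ff f x (u x) - Ff f x (v x))).trans (integral_mono_ae ?_ ?_ ?_)
    · exact ((H.F_int hu hIu).sub (H.F_int hv hIv)).norm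
    · exact ((((hIu.add hIv).const_mul _).const_mul _).add (hIw.const_mul _)).const_mul _
    · filter_upwards [H.aeΩ] with x hx
      refine (H.F_diff hx _ _).trans ?_
      have h1 := young_pt (A := |u x| + |v x|) (B := |u x - v x|) (by positivity) (by positivity) hδ hδ1
        (H.hq1 x hx) (H.hqp x hx)
      have h2 := add_rpow_pt (abs_nonneg (u x)) (abs_nonneg (v x)) (H.hq1 x hx) (H.hqp x hx)
      refine mul_le_mul_of_nonneg_left (h1.trans ?_) hc.le
      gcongr
  · exact ((hIu.add hIv).const_mul _).const_mul _
  · exact hIw.const_mul _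

lemma Lq_of_normq (H : HypF Ω q qp f c₁ c₂) {u : Eucl N → ℝ} (hu : Measurable u) {L : ℝ}
    (hL : 1 ≤ L) (h : normq Ω q u < ENNReal.ofReal L) :
    IntegrableOn (fun x => |u x| ^ q x) Ω ∧ ∫ x in Ω, |u x| ^ q x ≤ L ^ qp := by
  obtain ⟨_, ⟨l, hl, rfl, h1⟩, h2⟩ := sInf_lt_iff.1 h
  have hlL : l < L := (ENNReal.ofReal_lt_ofReal_iff (by linarith)).1 h2
  have key : ∫⁻ x in Ω, ENNReal.ofReal (|u x| ^ q x) ≤ ENNReal.ofReal (L ^ qp) := by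
    calc ∫⁻ x in Ω, ENNReal.ofReal (|u x| ^ q x)
        ≤ ∫⁻ x in Ω, ENNReal.ofReal (L ^ qp) * ENNReal.ofReal (|u x / l| ^ q x) := by
          refine lintegral_mono_ae ?_
          filter_upwards [H.aeΩ] with x hx
          rw [← ENNReal.ofReal_mul (by positivity)]
          refine ENNReal.ofReal_le_ofReal ?_
          have h3 : |u x| = l * |u x / l| := by
            rw [abs_div, abs_of_pos hl]; field_simp
          have hq := H.hq1 x hx
          calc |u x| ^ q x = l ^ q x * |u x / l| ^ q x := by
                conv_lhs => rw [h3]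
                rw [Real.mul_rpow hl.le (abs_nonneg _)]
            _ ≤ L ^ qp * |u x / l| ^ q x := by
                gcongr ?_ * _
                calc l ^ q x ≤ L ^ q x := by gcongr
                  _ ≤ L ^ qp := Real.rpow_le_rpow_of_exponent_le hL (H.hqp x hx)
      _ = ENNReal.ofReal (L ^ qp) * ∫⁻ x in Ω, ENNReal.ofReal (|u x / l| ^ q x) :=
          lintegral_const_mul' _ _ ENNReal.ofReal_ne_top
      _ ≤ ENNReal.ofReal (L ^ qp) * 1 := by gcongr
      _ = _ := mul_one _
  have hnn : ∀ x, 0 ≤ |u x| ^ q x := fun x => by positivity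
  constructor
  · refine ⟨H.pow_meas hu, ?_⟩
    rw [hasFiniteIntegral_iff_ofReal (ae_of_all _ hnn)]
    exact key.trans_lt ENNReal.ofReal_lt_top
  · rw [integral_eq_lintegral_of_nonneg_ae (ae_of_all _ hnn) (H.pow_meas hu)]
    refine (ENNReal.toReal_mono ENNReal.ofReal_ne_top key).trans ?_
    rw [ENNReal.toReal_ofReal (by positivity)]

end HypF

/-- radial kernel used to bound the modular of a bump function. -/
def kern (M α γ : ℝ) (d : ℝ) : ℝ := if d ≤ 1 then d ^ (α - M) else d ^ (-γ - M)

lemma kern_meas (M α γ : ℝ) : Measurable (kern M α γ) := by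
  unfold kern
  exact Measurable.ite measurableSet_Iic (by fun_prop) (by fun_prop)

lemma kern_int (hN : 1 ≤ N) {α γ : ℝ} (hα : 0 < α) (hγ : 0 < γ) :
    Integrable (fun h : Eucl N => kern N α γ ‖h‖) := by
  have : Nontrivial (Eucl N) := by
    apply Module.nontrivial_of_finrank_pos (R := ℝ)
    rw [finrank_euclideanSpace_fin]; omega
  rw [integrable_fun_norm_addHaar volume (f := kern N α γ), finrank_euclideanSpace_fin]
  have hpow : ∀ (y : ℝ), 0 < y → ∀ e : ℝ, y ^ (N - 1) * y ^ (e - N) = y ^ (e - 1) := by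
    intro y hy e
    rw [← Real.rpow_natCast, ← Real.rpow_add hy]
    congr 1
    push_cast [Nat.cast_sub hN]
    ring
  rw [← Ioc_union_Ioi_eq_Ioi (zero_le_one' ℝ)]
  refine IntegrableOn.union ?_ ?_
  · have h1 : IntegrableOn (fun y : ℝ => y ^ (α - 1)) (Ioc 0 1) := by
      have := intervalIntegral.intervalIntegrable_rpow' (a := 0) (b := 1) (r := α - 1) (by linarith)
      exact (intervalIntegrable_iff_integrableOn_Ioc_of_le zero_le_one).1 this
    refine h1.congr_fun (fun y hy => ?_) measurableSet_Ioc
    simp only [kern, if_pos hy.2, smul_eq_mul]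
    exact (hpow y hy.1 α).symm
  · have h1 := integrableOn_Ioi_rpow_of_lt (a := -γ - 1) (c := 1) (by linarith) one_pos
    refine h1.congr_fun (fun y hy => ?_) measurableSet_Ioi
    have hy' : 1 < y := hy
    simp only [kern, if_neg (not_le.2 hy'), smul_eq_mul]
    exact (hpow y (by linarith) (-γ)).symm

lemma kern_Q_lt_top (hN : 1 ≤ N) {α γ : ℝ} (hα : 0 < α) (hγ : 0 < γ) {Ω : Set (Eucl N)}
    (hΩv : volume Ω < ⊤) :
    ∫⁻ p in Qset Ω, ENNReal.ofReal (kern N α γ (dist p.1 p.2)) < ⊤ := by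
  set g : ℝ → ℝ≥0∞ := fun d => ENNReal.ofReal (kern N α γ d) with hg
  have hgm : Measurable g := (kern_meas _ _ _).ennreal_ofReal
  have hfin : ∫⁻ h : Eucl N, g ‖h‖ < ⊤ := (kern_int hN hα hγ).lintegral_lt_top
  have hQ : Qset Ω = Ω ×ˢ univ ∪ univ ×ˢ Ω := by
    ext p; simp [Qset]; tauto
  have hm : Measurable fun p : Eucl N × Eucl N => g (dist p.1 p.2) := hgm.comp (by fun_prop)
  rw [hQ]
  refine (lintegral_union_le _ _ _).trans_lt (ENNReal.add_lt_top.2 ⟨?_, ?_⟩)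
  · rw [Measure.volume_eq_prod, ← Measure.prod_restrict, Measure.restrict_univ,
      lintegral_prod _ hm.aemeasurable]
    have : ∀ x : Eucl N, ∫⁻ y, g (dist x y) = ∫⁻ h : Eucl N, g ‖h‖ := by
      intro x
      simp only [dist_eq_norm]
      exact lintegral_sub_left_eq_self (μ := (volume : Measure (Eucl N))) (fun h => g ‖h‖) x
    simp only [this, lintegral_const, Measure.restrict_apply MeasurableSet.univ, univ_inter]
    exact ENNReal.mul_lt_top hfin hΩv
  · rw [Measure.volume_eq_prod, ← Measure.prod_restrict, Measure.restrict_univ,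
      lintegral_prod_symm _ hm.aemeasurable]
    have : ∀ y : Eucl N, ∫⁻ x, g (dist x y) = ∫⁻ h : Eucl N, g ‖h‖ := by
      intro x
      simp only [dist_eq_norm]
      exact lintegral_sub_right_eq_self (μ := (volume : Measure (Eucl N))) (fun h => g ‖h‖) x
    simp only [this, lintegral_const, Measure.restrict_apply MeasurableSet.univ, univ_inter]
    exact ENNReal.mul_lt_top hfin hΩv

lemma exists_bump {a : Eucl N → Eucl N → ℝ → ℝ} {φm φp : ℝ} {s : ℝ} {Ω : Set (Eucl N)}
    {β : Eucl N → ℝ} (H : HypA a φm φp) (hN : 1 ≤ N) (hβm : Measurable β)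
    (hΩo : IsOpen Ω) (hΩb : Bornology.IsBounded Ω) (hΩne : Ω.Nonempty)
    (hs : s ∈ Set.Ioo (0:ℝ) 1) :
    ∃ v ∈ XsetM a s Ω β, ∃ (x₀ : Eucl N) (r : ℝ), 0 < r ∧ Metric.ball x₀ r ⊆ Ω ∧
      ∀ x ∈ Metric.ball x₀ r, v x ≠ 0 := by
  obtain ⟨x₀, hx₀⟩ := hΩne
  obtain ⟨r₀, hr₀, hball₀⟩ := Metric.isOpen_iff.1 hΩo x₀ hx₀
  obtain ⟨r, hr, hr1, hball⟩ : ∃ r : ℝ, 0 < r ∧ r ≤ 1 ∧ Metric.ball x₀ r ⊆ Ω :=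
    ⟨min r₀ 1, lt_min hr₀ one_pos, min_le_right _ _,
      (Metric.ball_subset_ball (min_le_left _ _)).trans hball₀⟩
  set v : Eucl N → ℝ := fun x => max 0 (r - dist x x₀) with hv
  have hvm : Measurable v := by fun_prop
  have hv0 : ∀ x, 0 ≤ v x := fun x => le_max_left _ _
  have hv1 : ∀ x, v x ≤ 1 := fun x => max_le zero_le_one (by linarith [dist_nonneg (x := x) (y := x₀)])
  have hd1 : ∀ x y, |v x - v y| ≤ 1 := fun x y => by
    rw [abs_le]; constructor <;> linarith [hv0 x, hv0 y, hv1 x, hv1 y]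
  have hd2 : ∀ x y, |v x - v y| ≤ dist x y := fun x y => by
    refine (abs_max_sub_max_le_max _ _ _ _).trans ?_
    simp only [sub_self, abs_zero]
    refine max_le dist_nonneg ?_
    rw [show r - dist x x₀ - (r - dist y x₀) = dist y x₀ - dist x x₀ by ring, dist_comm x y]
    exact abs_dist_sub_le _ _ _
  obtain ⟨C₀, hC₀⟩ := H.hΦ3
  have hvol : volume Ω < ⊤ := hΩb.measure_lt_top
  have hφm : 0 < φm := by linarith [H.hφm]
  have hC0 : 0 ≤ C₀ := (H.Phi_nonneg x₀ x₀ 1).trans (hC₀ x₀ x₀)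
  refine ⟨v, (mem_X_iff H hN hβm).2 ⟨hvm, ?_⟩, x₀, r, hr, hball, ?_⟩
  · rw [Imod_eq H hN hβm hvm]
    refine ENNReal.add_lt_top.2 ⟨ENNReal.add_lt_top.2 ⟨ENNReal.mul_lt_top ENNReal.ofReal_lt_top ?_, ?_⟩, ?_⟩
    · have hk := kern_Q_lt_top hN (α := (1 - s) * φm) (γ := s * φm)
        (mul_pos (by linarith [hs.2]) hφm) (mul_pos hs.1 hφm) hvol
      refine lt_of_le_of_lt ?_ (ENNReal.mul_lt_top (ENNReal.ofReal_lt_top (r := C₀)) hk)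
      unfold modQ
      rw [← lintegral_const_mul' _ _ ENNReal.ofReal_ne_top]
      refine lintegral_mono fun p => ?_
      rw [← ENNReal.ofReal_mul hC0]
      refine ENNReal.ofReal_le_ofReal ?_
      rw [one_mul]
      have hdd : 0 ≤ dist p.1 p.2 := dist_nonneg
      have h1 := hd1 p.1 p.2
      have h2 := hd2 p.1 p.2
      have hC := hC₀ p.1 p.2
      have ht : 0 ≤ |v p.1 - v p.2| := abs_nonneg _
      generalize |v p.1 - v p.2| = t at h1 h2 ht ⊢
      generalize hD : dist p.1 p.2 = d at *
      rcases hdd.eq_or_lt with h0 | hd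
      · subst h0
        have hNN : (N : ℝ) ≠ 0 := by positivity
        rw [Real.zero_rpow hNN, div_zero]
        apply mul_nonneg hC0
        unfold kern; rw [if_pos zero_le_one]; positivity
      have main : ∀ e : ℝ, t ≤ d ^ s * e → 0 ≤ e → e ≤ 1 →
          PhiF a p.1 p.2 (t / d ^ s) ≤ e ^ φm * C₀ := by
        intro e he he0 he1
        calc PhiF a p.1 p.2 (t / d ^ s) ≤ PhiF a p.1 p.2 (e * 1) := by
              apply H.Phi_mono
              rw [mul_one, abs_of_nonneg (by positivity), abs_of_nonneg he0, div_le_iff₀ (by positivity)]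
              linarith
          _ ≤ e ^ φm * PhiF a p.1 p.2 1 := H.Phi_scale_down _ _ he0 he1 _
          _ ≤ _ := by gcongr
      unfold kern
      split_ifs with hd1'
      · have := main (d ^ (1 - s)) (by rw [← Real.rpow_add hd]; simpa using h2) (by positivity)
          (Real.rpow_le_one hd.le hd1' (by linarith [hs.2]))
        rw [div_le_iff₀ (by positivity)]
        refine this.trans (le_of_eq ?_)
        rw [← Real.rpow_mul hd.le, mul_assoc, ← Real.rpow_add hd, sub_add_cancel, mul_comm]
      · have := main (d ^ (-s)) (by rw [← Real.rpow_add hd]; simpa using h1) (by positivity)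
          (Real.rpow_le_one_of_one_le_of_nonpos (by linarith) (by linarith [hs.1]))
        rw [div_le_iff₀ (by positivity)]
        refine this.trans (le_of_eq ?_)
        rw [← Real.rpow_mul hd.le, mul_assoc, ← Real.rpow_add hd, sub_add_cancel, mul_comm, neg_mul]
    · unfold modO
      refine lt_of_le_of_lt (b := ∫⁻ x in Ω, ENNReal.ofReal C₀) (lintegral_mono fun x => ?_) ?_
      · refine ENNReal.ofReal_le_ofReal (le_trans (H.Phi_mono x x (t := 1) ?_) (hC₀ x x))
        rw [div_one, abs_abs, abs_one, abs_of_nonneg (hv0 x)]; exact hv1 x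
      · rw [lintegral_const, Measure.restrict_apply MeasurableSet.univ, univ_inter]
        exact ENNReal.mul_lt_top ENNReal.ofReal_lt_top hvol
    · unfold modB
      rw [lintegral_eq_zero_of_ae_eq_zero]
      · exact ENNReal.zero_lt_top
      · filter_upwards [ae_restrict_mem hΩo.measurableSet.compl] with x hx
        have : v x = 0 := by
          have : ¬ dist x x₀ < r := fun h => hx (hball h)
          exact max_eq_left (by linarith)
        simp [this, HypA.Phi_zero]
  · intro x hx
    have : dist x x₀ < r := hx
    exact (lt_max_of_lt_right (by linarith)).ne'

section EL
variable {a : Eucl N → Eucl N → ℝ → ℝ} {φm φp : ℝ} {s : ℝ} {Ω : Set (Eucl N)} {β : Eucl N → ℝ}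

lemma Phi_integrable (H : HypA a φm φp) {u : Eucl N → ℝ} (hu : Measurable u)
    (hI : Imod a s Ω β u < ⊤) :
    Integrable (fun p => PhiF a p.1 p.2 (Tu s u p)) (Mu Ω β) := by
  refine ⟨(H.PhiT_meas (Tu_meas s hu)).aestronglyMeasurable, ?_⟩
  rw [hasFiniteIntegral_iff_ofReal (ae_of_all _ fun p => H.Phi_nonneg _ _ _)]
  exact hI

lemma Imod_toReal (H : HypA a φm φp) {u : Eucl N → ℝ} (hu : Measurable u) :
    (Imod a s Ω β u).toReal = ∫ p, PhiF a p.1 p.2 (Tu s u p) ∂(Mu Ω β) := by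
  rw [integral_eq_lintegral_of_nonneg_ae (ae_of_all _ fun p => H.Phi_nonneg _ _ _)
    (H.PhiT_meas (Tu_meas s hu)).aestronglyMeasurable]
  rfl

lemma I_deriv (H : HypA a φm φp) {u v : Eucl N → ℝ} (hu : Measurable u) (hv : Measurable v)
    (hIu : Imod a s Ω β u < ⊤) (hIv : Imod a s Ω β v < ⊤) :
    Integrable (fun p => phiF a p.1 p.2 (Tu s u p) * Tu s v p) (Mu Ω β) ∧
    HasDerivAt (fun e : ℝ => ∫ p, PhiF a p.1 p.2 (Tu s u p + e * Tu s v p) ∂(Mu Ω β))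
      (∫ p, phiF a p.1 p.2 (Tu s u p) * Tu s v p ∂(Mu Ω β)) 0 := by
  have hTu := Tu_meas s hu
  have hTv := Tu_meas s hv
  have := hasDerivAt_integral_of_dominated_loc_of_deriv_le (μ := Mu Ω β) (x₀ := (0:ℝ))
    (s := Metric.ball (0:ℝ) 1)
    (F := fun (e : ℝ) p => PhiF a p.1 p.2 (Tu s u p + e * Tu s v p))
    (F' := fun (e : ℝ) p => phiF a p.1 p.2 (Tu s u p + e * Tu s v p) * Tu s v p)
    (bound := fun p => φp * 2 ^ φp * (PhiF a p.1 p.2 (Tu s u p) + PhiF a p.1 p.2 (Tu s v p)))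
    (Metric.ball_mem_nhds _ one_pos)
    (Eventually.of_forall fun e => (H.PhiT_meas (by fun_prop)).aestronglyMeasurable)
    (by simpa using Phi_integrable H hu hIu)
    ((H.phiT_meas (by fun_prop)).mul hTv).aestronglyMeasurable
    (ae_of_all _ fun p e he => by
      apply H.phi_bound
      have : dist e 0 < 1 := he
      rw [dist_zero_right] at this
      exact this.le)
    (((Phi_integrable H hu hIu).add (Phi_integrable H hv hIv)).const_mul _)
    (ae_of_all _ fun p e _ => by
      have h1 : HasDerivAt (fun e : ℝ => Tu s u p + e * Tu s v p) (Tu s v p) e := by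
        simpa using ((hasDerivAt_id e).mul_const (Tu s v p)).const_add (Tu s u p)
      exact (H.hasDeriv p.1 p.2 _).comp e h1)
  simpa using this

lemma A_eq (hN : 1 ≤ N) (H : HypA a φm φp) (hβm : Measurable β)
    (hβ0 : ∀ᵐ x ∂(volume.restrict Ωᶜ), 0 ≤ β x) {u v : Eucl N → ℝ}
    (hu : Measurable u) (hv : Measurable v)
    (hInt1 : Integrable (fun p => phiF a p.1 p.2 (Tu s u p) * Tu s v p) (Mu Ω β)) :
    Aform a s Ω β u v = ∫ p, phiF a p.1 p.2 (Tu s u p) * Tu s v p ∂(Mu Ω β) := by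
  have hm : Measurable fun p : Eucl N × Eucl N => phiF a p.1 p.2 (Tu s u p) * Tu s v p :=
    (H.phiT_meas (Tu_meas s hu)).mul (Tu_meas s hv)
  have hdiag : ∀ x, phiF a x x (u x) * v x = a x x |u x| * u x * v x := by
    intro x; unfold phiF; split_ifs with h <;> simp [h]
  unfold Mu at hInt1 ⊢
  obtain ⟨h12, h3⟩ := integrable_add_measure.1 hInt1
  obtain ⟨h1, h2⟩ := integrable_add_measure.1 h12
  rw [integral_add_measure h12 h3, integral_add_measure h1 h2]
  unfold Aform
  congr 1
  · congr 1
    · unfold MuQ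
      rw [integral_withDensity_eq_integral_toReal_smul dens_meas
        (ae_of_all _ fun _ => ENNReal.ofReal_lt_top), ← integral_const_mul]
      refine integral_congr_ae (ae_of_all _ fun p => ?_)
      simp only [smul_eq_mul]
      rw [ENNReal.toReal_ofReal (by positivity)]
      by_cases hp : p.1 = p.2
      · have : (N : ℝ) ≠ 0 := by positivity
        simp [hp, Real.zero_rpow this]
      · have hd : 0 < dist p.1 p.2 ^ s := Real.rpow_pos_of_pos (dist_pos.2 hp) _
        rw [Tu, if_neg hp, Tu, if_neg hp]
        have : Ku a s u p = phiF a p.1 p.2 (Du s u p) := by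
          unfold Ku phiF
          have : u p.1 = u p.2 ↔ Du s u p = 0 := by
            unfold Du
            rw [div_eq_zero_iff, sub_eq_zero]
            constructor
            · exact Or.inl
            · rintro (h | h)
              · exact h
              · exact absurd h hd.ne'
          simp only [this]
        rw [this]
        ring
    · unfold MuO
      rw [integral_map diag_meas.aemeasurable hm.aestronglyMeasurable]
      simp only [Tu_diag, hdiag]
  · unfold MuB
    rw [integral_map diag_meas.aemeasurable hm.aestronglyMeasurable,
      integral_withDensity_eq_integral_toReal_smul (by fun_prop)
        (ae_of_all _ fun _ => ENNReal.ofReal_lt_top)]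
    refine integral_congr_ae ?_
    filter_upwards [hβ0] with x hx
    simp only [Tu_diag, hdiag, smul_eq_mul, ENNReal.toReal_ofReal hx]

variable {q : Eucl N → ℝ} {qp : ℝ} {f : Eucl N → ℝ → ℝ} {c₁ c₂ : ℝ}

lemma G_deriv (HF : HypF Ω q qp f c₁ c₂) {u v : Eucl N → ℝ} (hu : Measurable u) (hv : Measurable v)
    (hIu : IntegrableOn (fun x => |u x| ^ q x) Ω) (hIv : IntegrableOn (fun x => |v x| ^ q x) Ω) :
    HasDerivAt (fun e : ℝ => ∫ x in Ω, Ff f x (u x + e * v x)) (∫ x in Ω, f x (u x) * v x) 0 := by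
  have hc := HF.hc₁
  have := hasDerivAt_integral_of_dominated_loc_of_deriv_le (μ := volume.restrict Ω) (x₀ := (0:ℝ))
    (s := Metric.ball (0:ℝ) 1)
    (F := fun (e : ℝ) x => Ff f x (u x + e * v x))
    (F' := fun (e : ℝ) x => f x (u x + e * v x) * v x)
    (bound := fun x => c₁ * (|u x| + |v x|) ^ q x)
    (Metric.ball_mem_nhds _ one_pos)
    (Eventually.of_forall fun e => (HF.F_meas (by fun_prop)).aestronglyMeasurable)
    (by simpa [IntegrableOn] using HF.F_int hu hIu)
    ((HF.fu_meas (by fun_prop)).mul hv).aestronglyMeasurable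
    (by
      filter_upwards [HF.aeΩ] with x hx e he
      have he' : |e| < 1 := by
        have : dist e 0 < 1 := he
        rwa [dist_zero_right] at this
      have hq := HF.hq1 x hx
      have hb : |u x + e * v x| ≤ |u x| + |v x| := by
        refine (abs_add_le _ _).trans ?_
        rw [abs_mul]; nlinarith [abs_nonneg (v x)]
      have h2 := Real.rpow_add_one' (x := |u x| + |v x|) (by positivity) (y := q x - 1) (by linarith)
      rw [sub_add_cancel] at h2
      rw [Real.norm_eq_abs, abs_mul, h2, ← mul_assoc]
      have h3 := HF.hf1 x hx (u x + e * v x)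
      refine mul_le_mul (h3.trans ?_) (by linarith [abs_nonneg (u x)]) (abs_nonneg _) (by positivity)
      gcongr)
    ((HF.add_int hu hv hIu hIv).const_mul _)
    (ae_of_all _ fun x e _ => by
      have h1 : HasDerivAt (fun e : ℝ => u x + e * v x) (v x) e := by
        simpa using ((hasDerivAt_id e).mul_const (v x)).const_add (u x)
      exact (HF.F_deriv x _).comp e h1)
  simpa using this.2

lemma euler_lagrange (hN : 1 ≤ N) (H : HypA a φm φp) (hβm : Measurable β)
    (hβ0 : ∀ᵐ x ∂(volume.restrict Ωᶜ), 0 ≤ β x) (HF : HypF Ω q qp f c₁ c₂)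
    (hLq : ∀ u ∈ XsetM a s Ω β, IntegrableOn (fun x => |u x| ^ q x) Ω) {lam : ℝ}
    {u : Eucl N → ℝ} (hu : u ∈ XsetM a s Ω β)
    (hmin : ∀ w ∈ XsetM a s Ω β, Jlam a s Ω β f lam u ≤ Jlam a s Ω β f lam w)
    {v : Eucl N → ℝ} (hv : v ∈ XsetM a s Ω β) :
    Aform a s Ω β u v = lam * ∫ x in Ω, f x (u x) * v x := by
  obtain ⟨hum, hIu⟩ := (mem_X_iff H hN hβm).1 hu
  obtain ⟨hvm, hIv⟩ := (mem_X_iff H hN hβm).1 hv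
  obtain ⟨hInt1, hd1⟩ := I_deriv (s := s) (Ω := Ω) (β := β) H hum hvm hIu hIv
  have hd2 := G_deriv HF hum hvm (hLq u hu) (hLq v hv)
  rw [A_eq hN H hβm hβ0 hum hvm hInt1]
  have hd := hd1.sub (hd2.const_mul lam)
  have hX : ∀ e : ℝ, (fun x => u x + e * v x) ∈ XsetM a s Ω β := by
    intro e
    have := X_lin H hN hβm hu hv 1 e
    simpa using this
  have hJ : ∀ e : ℝ, Jlam a s Ω β f lam (fun x => u x + e * v x) =
      (∫ p, PhiF a p.1 p.2 (Tu s u p + e * Tu s v p) ∂(Mu Ω β))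
        - lam * ∫ x in Ω, Ff f x (u x + e * v x) := by
    intro e
    rw [Jlam_eq H hN hβm (hX e), Imod_toReal H (by fun_prop)]
    simp only [Tu_add, Tu_smul]
  have hloc : IsLocalMin ((fun e : ℝ => ∫ p, PhiF a p.1 p.2 (Tu s u p + e * Tu s v p) ∂(Mu Ω β))
      - fun e => lam * ∫ x in Ω, Ff f x (u x + e * v x)) 0 := by
    refine Eventually.of_forall fun e => ?_
    simp only [Pi.sub_apply]
    rw [← hJ, ← hJ]
    have := hmin _ (hX e)
    simpa using this
  have := hloc.hasDerivAt_eq_zero hd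
  linarith

end EL

lemma fatou_lim {Y : Type*} [MeasurableSpace Y] {μ : Measure Y} {g : ℕ → Y → ℝ≥0∞} {g' : Y → ℝ≥0∞}
    {L : ℝ≥0∞} (hm : ∀ i, AEMeasurable (g i) μ)
    (h : ∀ᵐ y ∂μ, Tendsto (fun i => g i y) atTop (nhds (g' y)))
    (hL : Tendsto (fun i => ∫⁻ y, g i y ∂μ) atTop (nhds L)) : ∫⁻ y, g' y ∂μ ≤ L := by
  calc ∫⁻ y, g' y ∂μ = ∫⁻ y, liminf (fun i => g i y) atTop ∂μ := by
        refine lintegral_congr_ae ?_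
        filter_upwards [h] with y hy
        exact hy.liminf_eq.symm
    _ ≤ liminf (fun i => ∫⁻ y, g i y ∂μ) atTop := lintegral_liminf_le' hm
    _ = L := hL.liminf_eq

section Min
variable {a : Eucl N → Eucl N → ℝ → ℝ} {φm φp : ℝ} {s : ℝ} {Ω : Set (Eucl N)} {β : Eucl N → ℝ}

lemma ae_conv (H : HypA a φm φp) {V : ℕ → Eucl N → ℝ} (hV : ∀ i, Measurable (V i))
    (hI : ∀ i, Imod a s Ω β (fun x => (1/2) * V i x + (-1/2) * V (i+1) x) ≤
      ENNReal.ofReal (((2:ℝ) ^ i) ^ (-φp) * (1/2) ^ i)) :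
    ∀ᵐ p ∂(Mu Ω β), ∃ l, Tendsto (fun i => Tu s (V i) p) atTop (nhds l) := by
  set d : ℕ → Eucl N → ℝ := fun i x => (1/2) * V i x + (-1/2) * V (i+1) x with hd
  have hdm : ∀ i, Measurable (d i) := fun i => by
    have := hV i
    have := hV (i+1)
    fun_prop
  have h1 : ∀ i, Imod a s Ω β (fun x => 2 ^ i * d i x) ≤ ENNReal.ofReal ((1/2) ^ i) := by
    intro i
    have h2i : (1:ℝ) ≤ 2 ^ i := one_le_pow₀ (by norm_num)
    refine (Imod_scale_up H h2i _).trans ?_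
    calc _ ≤ ENNReal.ofReal (((2:ℝ) ^ i) ^ φp) * ENNReal.ofReal (((2:ℝ) ^ i) ^ (-φp) * (1/2) ^ i) := by
          gcongr; exact hI i
      _ = _ := by
          rw [← ENNReal.ofReal_mul (by positivity), ← mul_assoc, ← Real.rpow_add (by positivity)]
          simp
  have hmeas : ∀ i, Measurable fun p : Eucl N × Eucl N =>
      ENNReal.ofReal (PhiF a p.1 p.2 (Tu s (fun x => 2 ^ i * d i x) p)) := fun i =>
    (H.PhiT_meas (Tu_meas s (by have := hdm i; fun_prop))).ennreal_ofReal
  have h2 : ∫⁻ p, ∑' i, ENNReal.ofReal (PhiF a p.1 p.2 (Tu s (fun x => 2 ^ i * d i x) p)) ∂(Mu Ω β) ≠ ⊤ := by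
    rw [lintegral_tsum fun i => (hmeas i).aemeasurable]
    refine ne_top_of_le_ne_top ?_ (ENNReal.tsum_le_tsum h1)
    rw [← ENNReal.ofReal_tsum_of_nonneg (fun i => by positivity) summable_geometric_two]
    exact ENNReal.ofReal_ne_top
  filter_upwards [ae_lt_top' (AEMeasurable.ennreal_tsum fun i => (hmeas i).aemeasurable) h2] with p hp
  have h3 := ENNReal.tendsto_atTop_zero_of_tsum_ne_top hp.ne
  have hpos : 0 < ENNReal.ofReal (PhiF a p.1 p.2 1) := ENNReal.ofReal_pos.2 (H.Phi_pos _ _ one_pos)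
  have h4 : ∀ᶠ i in atTop, |Tu s (V i) p - Tu s (V (i+1)) p| ≤ 2 * (1/2) ^ i := by
    filter_upwards [h3.eventually (gt_mem_nhds hpos)] with i hi
    have h5 : |Tu s (fun x => 2 ^ i * d i x) p| ≤ 1 := by
      by_contra hcon
      refine absurd hi (not_lt.2 (ENNReal.ofReal_le_ofReal (H.Phi_mono _ _ ?_)))
      rw [abs_one]; exact (not_le.1 hcon).le
    rw [Tu_smul, Tu_add, Tu_smul, Tu_smul, abs_mul, abs_of_pos (by positivity : (0:ℝ) < 2 ^ i)] at h5
    have h6 : Tu s (V i) p - Tu s (V (i+1)) p = 2 * (1 / 2 * Tu s (V i) p + -1 / 2 * Tu s (V (i + 1)) p) := by ring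
    rw [h6, abs_mul, abs_two]
    have h7 : (1/2 : ℝ) ^ i * 2 ^ i = 1 := by rw [← mul_pow]; norm_num
    have h8 : (0:ℝ) < (1/2) ^ i := by positivity
    nlinarith [abs_nonneg (1 / 2 * Tu s (V i) p + -1 / 2 * Tu s (V (i + 1)) p)]
  refine cauchySeq_tendsto_of_complete (cauchySeq_of_summable_dist ?_)
  refine Summable.of_norm_bounded_eventually_nat (g := fun i => 2 * (1/2 : ℝ) ^ i)
    (summable_geometric_two.mul_left 2) ?_
  filter_upwards [h4] with i hi
  rwa [Real.norm_of_nonneg dist_nonneg, Real.dist_eq]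

lemma ae_conv' (hN : 1 ≤ N) (hΩo : IsOpen Ω) (hΩne : Ω.Nonempty) {V : ℕ → Eucl N → ℝ}
    (h : ∀ᵐ p ∂(Mu Ω β), ∃ l, Tendsto (fun i => Tu s (V i) p) atTop (nhds l)) :
    ∀ᵐ x : Eucl N, ∃ l, Tendsto (fun i => V i x) atTop (nhds l) := by
  unfold Mu at h
  rw [ae_add_measure_iff, ae_add_measure_iff] at h
  obtain ⟨⟨h1, h2⟩, -⟩ := h
  have hO : ∀ᵐ x ∂(volume.restrict Ω), ∃ l, Tendsto (fun i => V i x) atTop (nhds l) := by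
    have := ae_of_ae_map diag_meas.aemeasurable h2
    simpa only [Tu_diag] using this
  have hmO := hΩo.measurableSet
  refine ae_of_ae_restrict_of_ae_restrict_compl Ω hO ?_
  unfold MuQ at h1
  rw [ae_withDensity_iff dens_meas] at h1
  have hsub : Ω ×ˢ Ωᶜ ⊆ Qset Ω := by
    rintro ⟨x, y⟩ ⟨hx, hy⟩ ⟨hx', -⟩
    exact hx' hx
  have h3 := ae_restrict_of_ae_restrict_of_subset hsub h1
  rw [Measure.volume_eq_prod, ← Measure.prod_restrict] at h3
  have h4 := Measure.ae_ae_of_ae_prod h3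
  have hne : (ae (volume.restrict Ω)).NeBot := by
    rw [ae_neBot]
    intro h0
    rw [Measure.restrict_eq_zero] at h0
    exact (hΩo.measure_pos volume hΩne).ne' h0
  obtain ⟨x, hx, ⟨l, hl⟩, hxO⟩ := (h4.and (hO.and (ae_restrict_mem hmO))).exists
  filter_upwards [hx, ae_restrict_mem hmO.compl] with y hy hyO
  have hxy : x ≠ y := fun h => hyO (h ▸ hxO)
  have hdist : 0 < dist x y := dist_pos.2 hxy
  obtain ⟨l', hl'⟩ := hy (by
    rw [ne_eq, ENNReal.ofReal_eq_zero, not_le]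
    positivity)
  have hds : 0 < dist x y ^ s := Real.rpow_pos_of_pos hdist _
  refine ⟨l - l' * dist x y ^ s, (hl.sub (hl'.mul_const (dist x y ^ s))).congr fun i => ?_⟩
  simp only [Tu, hxy, if_false, Du]
  field_simp
  ring

lemma Mu_tendsto {V : ℕ → Eucl N → ℝ} {u : Eucl N → ℝ} (hΩo : IsOpen Ω)
    (h : ∀ᵐ x : Eucl N, Tendsto (fun i => V i x) atTop (nhds (u x)))
    (hV : ∀ i, Measurable (V i)) (hu : Measurable u) :
    ∀ᵐ p ∂(Mu Ω β), Tendsto (fun i => Tu s (V i) p) atTop (nhds (Tu s u p)) := by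
  have hms : MeasurableSet {p | Tendsto (fun i => Tu s (V i) p) atTop (nhds (Tu s u p))} := by
    have hm := Tu_meas s hu
    have hmi := fun i => Tu_meas s (hV i)
    have : {p | Tendsto (fun i => Tu s (V i) p) atTop (nhds (Tu s u p))}
        = {p | Tendsto (fun i => Tu s (V i) p - Tu s u p) atTop (nhds 0)} := by
      ext p
      simp only [mem_setOf_eq]
      exact tendsto_sub_nhds_zero_iff.symm
    rw [this]
    exact measurableSet_tendsto _ (fun i => (hmi i).sub hm)
  unfold Mu
  rw [ae_add_measure_iff, ae_add_measure_iff]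
  refine ⟨⟨?_, ?_⟩, ?_⟩
  · unfold MuQ
    refine (withDensity_absolutelyContinuous _ _).ae_le ?_
    refine ae_restrict_of_ae ?_
    rw [Measure.volume_eq_prod]
    filter_upwards [Measure.quasiMeasurePreserving_fst.ae h, Measure.quasiMeasurePreserving_snd.ae h] with p h1 h2
    unfold Tu Du
    split_ifs
    · exact h1
    · exact (h1.sub h2).div_const _
  · unfold MuO
    rw [ae_map_iff diag_meas.aemeasurable hms]
    simp only [Tu_diag]
    exact ae_restrict_of_ae h
  · unfold MuB
    rw [ae_map_iff diag_meas.aemeasurable hms]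
    simp only [Tu_diag]
    exact (withDensity_absolutelyContinuous _ _).ae_le (ae_restrict_of_ae h)

variable {q : Eucl N → ℝ} {qp : ℝ} {f : Eucl N → ℝ → ℝ} {c₁ c₂ : ℝ}

lemma Lq_bound (hN : 1 ≤ N) (H : HypA a φm φp) (hβm : Measurable β) (HF : HypF Ω q qp f c₁ c₂)
    {c : ℝ} (hc : 0 < c)
    (hemb : ∀ u ∈ XsetM a s Ω β, normq Ω q u ≤ ENNReal.ofReal c * normM a s Ω β u)
    {u : Eucl N → ℝ} (hu : u ∈ XsetM a s Ω β) {K : ℝ} (hK : 1 ≤ K)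
    (hI : 2 * (Imod a s Ω β u).toReal ≤ K) :
    IntegrableOn (fun x => |u x| ^ q x) Ω ∧
      ∫ x in Ω, |u x| ^ q x ≤ (1 + c * K ^ (1 / φm)) ^ qp := by
  have hu' := (mem_X_iff H hN hβm).1 hu
  have hK0 : 0 < K := by linarith
  refine HF.Lq_of_normq hu'.1 ?_ ?_
  · have : 0 ≤ c * K ^ (1 / φm) := by positivity
    linarith
  · have h1 := norm_bound H hN hβm hu'.1 hK (s := s) (Ω := Ω) (β := β) (by
      rw [← ENNReal.ofReal_toReal hu'.2.ne, ← ENNReal.ofReal_mul (by norm_num)]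
      exact ENNReal.ofReal_le_ofReal hI)
    calc normq Ω q u ≤ ENNReal.ofReal c * ENNReal.ofReal (K ^ (1 / φm)) := by
          refine (hemb u hu).trans ?_
          gcongr
      _ = ENNReal.ofReal (c * K ^ (1 / φm)) := (ENNReal.ofReal_mul hc.le).symm
      _ < _ := by
          rw [ENNReal.ofReal_lt_ofReal_iff (by positivity)]
          linarith

lemma sublin {A θ : ℝ} (hA : 0 < A) (hθ : θ < 1) (hθ0 : 0 ≤ θ) :
    ∃ C, ∀ K : ℝ, 1 ≤ K → A * K ^ θ ≤ K / 8 + C := by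
  refine ⟨A * ((8 * A) ^ (1 / (1 - θ))) ^ θ, fun K hK => ?_⟩
  have hK0 : 0 < K := by linarith
  rcases le_or_gt (A * K ^ θ) (K / 8) with h | h
  · have : 0 ≤ A * ((8 * A) ^ (1 / (1 - θ))) ^ θ := by positivity
    linarith
  · have h1 : K ^ (1 - θ) ≤ 8 * A := by
      rw [Real.rpow_sub hK0, Real.rpow_one, div_le_iff₀ (by positivity)]
      linarith
    have h2 : K ≤ (8 * A) ^ (1 / (1 - θ)) := by
      have h1t : 0 < 1 - θ := by linarith
      calc K = (K ^ (1 - θ)) ^ (1 / (1 - θ)) := by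
            rw [← Real.rpow_mul hK0.le, mul_one_div_cancel h1t.ne', Real.rpow_one]
        _ ≤ _ := by gcongr
    have h3 : A * K ^ θ ≤ A * ((8 * A) ^ (1 / (1 - θ))) ^ θ := by gcongr
    linarith

lemma coercive (hN : 1 ≤ N) (H : HypA a φm φp) (hβm : Measurable β) (HF : HypF Ω q qp f c₁ c₂)
    (hqpφ : qp < φm) {c : ℝ} (hc : 0 < c)
    (hemb : ∀ u ∈ XsetM a s Ω β, normq Ω q u ≤ ENNReal.ofReal c * normM a s Ω β u)
    {lam : ℝ} (hlam : 0 < lam) :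
    ∃ C₀ : ℝ, ∀ u ∈ XsetM a s Ω β,
      (Imod a s Ω β u).toReal / 2 - C₀ ≤ Jlam a s Ω β f lam u := by
  have hφ : 0 < φm := by linarith [H.hφm]
  have hqp0 : 0 < qp := by linarith [HF.hqp1]
  have hc1 := HF.hc₁
  obtain ⟨C, hC⟩ := sublin (A := lam * (c₁ * (1 + c) ^ qp)) (θ := qp / φm) (by positivity)
    ((div_lt_one hφ).2 hqpφ) (by positivity)
  refine ⟨C + 1, fun u hu => ?_⟩
  have hu' := (mem_X_iff H hN hβm).1 hu
  rw [Jlam_eq H hN hβm hu]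
  set I := (Imod a s Ω β u).toReal with hI
  have hI0 : 0 ≤ I := ENNReal.toReal_nonneg
  have hK1 : 1 ≤ 1 + 2 * I := by linarith
  obtain ⟨hInt1, hb⟩ := Lq_bound hN H hβm HF hc hemb hu hK1 (by linarith)
  have hG := HF.G_le hu'.1 hInt1
  have hKK := hC _ hK1
  have h2 : (1 + c * (1 + 2 * I) ^ (1 / φm)) ^ qp ≤ (1 + c) ^ qp * (1 + 2 * I) ^ (qp / φm) := by
    have h3 : 1 ≤ (1 + 2 * I) ^ (1 / φm) := Real.one_le_rpow hK1 (by positivity)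
    calc (1 + c * (1 + 2 * I) ^ (1 / φm)) ^ qp ≤ ((1 + c) * (1 + 2 * I) ^ (1 / φm)) ^ qp := by
          gcongr
          nlinarith
      _ = _ := by
          rw [Real.mul_rpow (by positivity) (by positivity), ← Real.rpow_mul (by positivity)]
          congr 2
          ring
  have h4 : lam * ∫ x in Ω, Ff f x (u x) ≤ lam * (c₁ * (1 + c) ^ qp) * (1 + 2 * I) ^ (qp / φm) := by
    calc lam * ∫ x in Ω, Ff f x (u x) ≤ lam * (c₁ * ((1 + c) ^ qp * (1 + 2 * I) ^ (qp / φm))) := by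
          gcongr
          refine hG.trans ?_
          gcongr
          exact hb.trans h2
      _ = _ := by ring
  linarith

lemma exists_neg (hN : 1 ≤ N) (H : HypA a φm φp) (hβm : Measurable β) (HF : HypF Ω q qp f c₁ c₂)
    (hΩb : Bornology.IsBounded Ω) (hΩne : Ω.Nonempty) (hs : s ∈ Set.Ioo (0:ℝ) 1)
    (hqpφ : qp < φm)
    (hLq : ∀ u ∈ XsetM a s Ω β, IntegrableOn (fun x => |u x| ^ q x) Ω)
    {lam : ℝ} (hlam : 0 < lam) :
    ∃ u ∈ XsetM a s Ω β, Jlam a s Ω β f lam u < 0 := by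
  obtain ⟨v, hv, x₀, r, hr, hball, hvne⟩ := exists_bump (s := s) (β := β) H hN hβm HF.hΩo hΩb hΩne hs
  obtain ⟨hvm, hIv⟩ := (mem_X_iff H hN hβm).1 hv
  have hvint := hLq v hv
  have hpos : 0 < ∫ x in Ω, |v x| ^ q x := by
    rw [setIntegral_pos_iff_support_of_nonneg_ae (ae_of_all _ fun x => by positivity) hvint]
    refine lt_of_lt_of_le (Metric.measure_ball_pos volume x₀ hr) (measure_mono fun x hx => ⟨?_, hball hx⟩)
    have := abs_pos.2 (hvne x hx)
    exact (by positivity : 0 < |v x| ^ q x).ne'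
  have hc2 := HF.hc₂
  set I := (Imod a s Ω β v).toReal with hI
  have hI0 : 0 ≤ I := ENNReal.toReal_nonneg
  set B := lam * (c₂ * ∫ x in Ω, |v x| ^ q x) with hB
  have hBpos : 0 < B := by positivity
  have he : 0 < φm - qp := by linarith
  obtain ⟨t, ht0, ht1, ht⟩ : ∃ t : ℝ, 0 < t ∧ t ≤ 1 ∧ t ^ (φm - qp) ≤ B / (I + 1) := by
    refine ⟨min 1 ((B / (I + 1)) ^ (1 / (φm - qp))), lt_min one_pos (by positivity), min_le_left _ _, ?_⟩
    calc _ ≤ ((B / (I + 1)) ^ (1 / (φm - qp))) ^ (φm - qp) := by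
          gcongr
          exact min_le_right _ _
      _ = _ := by
          rw [← Real.rpow_mul (by positivity), one_div_mul_cancel he.ne', Real.rpow_one]
  have htv : (fun x => t * v x) ∈ XsetM a s Ω β := by
    have := X_lin H hN hβm hv hv t 0
    simpa using this
  refine ⟨_, htv, ?_⟩
  rw [Jlam_eq H hN hβm htv]
  have h1 : (Imod a s Ω β (fun x => t * v x)).toReal ≤ t ^ φm * I := by
    have := ENNReal.toReal_mono (ENNReal.mul_lt_top ENNReal.ofReal_lt_top hIv).ne
      (Imod_scale_down (s := s) (Ω := Ω) (β := β) H ht0.le ht1 v)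
    rwa [ENNReal.toReal_mul, ENNReal.toReal_ofReal (by positivity)] at this
  have h2 := HF.le_G (u := fun x => t * v x) (by fun_prop) (hLq _ htv)
  have h3 : t ^ qp * ∫ x in Ω, |v x| ^ q x ≤ ∫ x in Ω, |t * v x| ^ q x := by
    rw [← integral_const_mul]
    refine integral_mono_ae (hvint.const_mul _) (hLq _ htv) ?_
    filter_upwards [HF.aeΩ] with x hx
    rw [abs_mul, abs_of_pos ht0, Real.mul_rpow ht0.le (abs_nonneg _)]
    gcongr ?_ * _
    exact Real.rpow_le_rpow_of_exponent_ge ht0 ht1 (HF.hqp x hx)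
  have h4 : t ^ φm = t ^ (φm - qp) * t ^ qp := by rw [← Real.rpow_add ht0]; ring_nf
  have h5 : t ^ (φm - qp) * I < B := by
    calc t ^ (φm - qp) * I ≤ B / (I + 1) * I := by gcongr
      _ < B / (I + 1) * (I + 1) := by gcongr; linarith
      _ = B := by field_simp
  have h6 : 0 < t ^ qp := by positivity
  have h7 : lam * (c₂ * (t ^ qp * ∫ x in Ω, |v x| ^ q x)) ≤ lam * ∫ x in Ω, Ff f x (t * v x) := by
    gcongr
    refine le_trans ?_ h2
    gcongr
  have h8 : lam * (c₂ * (t ^ qp * ∫ x in Ω, |v x| ^ q x)) = t ^ qp * B := by rw [hB]; ring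
  rw [h8] at h7
  rw [h4] at h1
  nlinarith

end Min

section Exist
variable {a : Eucl N → Eucl N → ℝ → ℝ} {φm φp : ℝ} {s : ℝ} {Ω : Set (Eucl N)} {β : Eucl N → ℝ}
  {q : Eucl N → ℝ} {qp : ℝ} {f : Eucl N → ℝ → ℝ} {c₁ c₂ : ℝ}

lemma G_lim (HF : HypF Ω q qp f c₁ c₂) {ι : Type*} {l : Filter ι} {g : ι → Eucl N → ℝ}
    {w : Eucl N → ℝ} (hg : ∀ i, Measurable (g i)) (hw : Measurable w)
    (hIg : ∀ i, IntegrableOn (fun x => |g i x| ^ q x) Ω)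
    (hIw : IntegrableOn (fun x => |w x| ^ q x) Ω)
    (hId : ∀ i, IntegrableOn (fun x => |g i x - w x| ^ q x) Ω)
    {M : ℝ} (hM : ∀ i, ∫ x in Ω, |g i x| ^ q x ≤ M)
    (ht : Tendsto (fun i => ∫ x in Ω, |g i x - w x| ^ q x) l (nhds 0)) :
    Tendsto (fun i => ∫ x in Ω, Ff f x (g i x)) l (nhds (∫ x in Ω, Ff f x (w x))) := by
  have hc1 := HF.hc₁
  set W := ∫ x in Ω, |w x| ^ q x with hW
  have hW0 : 0 ≤ W := integral_nonneg fun x => by positivity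
  set M' := |M| + W with hM'
  have hM'0 : 0 ≤ M' := by positivity
  rw [Metric.tendsto_nhds]
  intro ε hε
  set P := c₁ * (2 ^ qp * M') with hP
  have hP0 : 0 ≤ P := by positivity
  set δ := min 1 (ε / (2 * (P + 1))) with hδd
  have hδ : 0 < δ := by positivity
  have hδ1 : δ ≤ 1 := min_le_left _ _
  have hδP : δ * P < ε / 2 := by
    have h1 : δ ≤ ε / (2 * (P + 1)) := min_le_right _ _
    calc δ * P ≤ ε / (2 * (P + 1)) * P := by gcongr
      _ < ε / 2 := by
        rw [div_mul_eq_mul_div, div_lt_div_iff₀ (by positivity) (by norm_num)]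
        nlinarith
  have h2 := (ht.const_mul (c₁ * δ ^ (-qp)))
  rw [mul_zero] at h2
  have h3 := (Metric.tendsto_nhds.1 h2) (ε / 2) (by positivity)
  filter_upwards [h3] with i hi
  rw [Real.dist_eq, sub_zero] at hi
  rw [Real.dist_eq]
  have h4 := HF.G_cont (hg i) hw (hIg i) hIw (hId i) hδ hδ1
  have h5 : ∫ x in Ω, |g i x| ^ q x + 0 ≤ M := by simpa using hM i
  have h6 : (∫ x in Ω, |g i x| ^ q x) + W ≤ M' := by
    have := le_abs_self M
    have := hM i
    linarith
  have h7 : c₁ * (δ * (2 ^ qp * ((∫ x in Ω, |g i x| ^ q x) + W))) ≤ δ * P := by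
    calc _ ≤ c₁ * (δ * (2 ^ qp * M')) := by gcongr
      _ = δ * P := by rw [hP]; ring
  have h8 := (le_abs_self _).trans_lt hi
  rw [← hW] at h4
  linarith

lemma mid_pow {A B r : ℝ} (hr : 1 < r) : |(1/2) * A + (1/2) * B| ^ r ≤ |A| ^ r + |B| ^ r := by
  have hA : 0 ≤ |A| ^ r := by positivity
  have hB : 0 ≤ |B| ^ r := by positivity
  have h : |(1/2) * A + (1/2) * B| ≤ (1/2) * |A| + (1/2) * |B| := by
    refine (abs_add_le _ _).trans ?_
    rw [abs_mul, abs_mul]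
    norm_num
  rcases le_total |A| |B| with h1 | h1
  · have : |(1/2) * A + (1/2) * B| ^ r ≤ |B| ^ r :=
      Real.rpow_le_rpow (abs_nonneg _) (by linarith) (by linarith)
    linarith
  · have : |(1/2) * A + (1/2) * B| ^ r ≤ |A| ^ r :=
      Real.rpow_le_rpow (abs_nonneg _) (by linarith) (by linarith)
    linarith

lemma mid_int (HF : HypF Ω q qp f c₁ c₂) {u v : Eucl N → ℝ}
    (hu : IntegrableOn (fun x => |u x| ^ q x) Ω) (hv : IntegrableOn (fun x => |v x| ^ q x) Ω)
    (hm : IntegrableOn (fun x => |(1/2) * u x + (1/2) * v x| ^ q x) Ω) :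
    ∫ x in Ω, |(1/2) * u x + (1/2) * v x| ^ q x ≤
      (∫ x in Ω, |u x| ^ q x) + ∫ x in Ω, |v x| ^ q x := by
  rw [← integral_add hu hv]
  refine integral_mono_ae hm (hu.add hv) ?_
  filter_upwards [HF.aeΩ] with x hx
  exact mid_pow (HF.hq1 x hx)

lemma cauchy_part (hN : 1 ≤ N) (H : HypA a φm φp) (hβm : Measurable β) (HF : HypF Ω q qp f c₁ c₂)
    (hLq : ∀ u ∈ XsetM a s Ω β, IntegrableOn (fun x => |u x| ^ q x) Ω)
    {lam m : ℝ} (hm : ∀ u ∈ XsetM a s Ω β, m ≤ Jlam a s Ω β f lam u)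
    {U : ℕ → Eucl N → ℝ} (hU : ∀ k, U k ∈ XsetM a s Ω β)
    (hJ : Tendsto (fun k => Jlam a s Ω β f lam (U k)) atTop (nhds m))
    {M : ℝ} (hM : ∀ k, ∫ x in Ω, |U k x| ^ q x ≤ M)
    {w : Eucl N → ℝ} (hw : w ∈ XsetM a s Ω β)
    (hUw : Tendsto (fun k => ∫ x in Ω, |U k x - w x| ^ q x) atTop (nhds 0)) :
    Tendsto (fun k => (Imod a s Ω β (U k)).toReal) atTop
      (nhds (m + lam * ∫ x in Ω, Ff f x (w x))) ∧
    Tendsto (fun p : ℕ × ℕ =>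
      (Imod a s Ω β (fun x => (1/2) * U p.1 x + (-1/2) * U p.2 x)).toReal)
      (atTop ×ˢ atTop) (nhds 0) := by
  have hX : ∀ k, Measurable (U k) ∧ Imod a s Ω β (U k) < ⊤ := fun k => (mem_X_iff H hN hβm).1 (hU k)
  have hwm := ((mem_X_iff H hN hβm).1 hw).1
  have hd : ∀ u ∈ XsetM a s Ω β, IntegrableOn (fun x => |u x - w x| ^ q x) Ω := by
    intro u hu
    have := hLq _ (X_lin H hN hβm hu hw 1 (-1))
    refine this.congr_fun (fun x _ => ?_) HF.hΩo.measurableSet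
    simp only []
    congr 2
    ring
  have hG := G_lim HF (l := atTop) (fun k => (hX k).1) hwm (fun k => hLq _ (hU k)) (hLq _ hw)
    (fun k => hd _ (hU k)) hM hUw
  set G := ∫ x in Ω, Ff f x (w x) with hGd
  have hI : Tendsto (fun k => (Imod a s Ω β (U k)).toReal) atTop (nhds (m + lam * G)) := by
    refine (hJ.add (hG.const_mul lam)).congr fun k => ?_
    rw [Jlam_eq H hN hβm (hU k)]
    ring
  refine ⟨hI, ?_⟩
  set mid : ℕ × ℕ → Eucl N → ℝ := fun p x => (1/2) * U p.1 x + (1/2) * U p.2 x with hmid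
  have hmX : ∀ p, mid p ∈ XsetM a s Ω β := fun p => X_lin H hN hβm (hU p.1) (hU p.2) _ _
  have hGm := G_lim HF (l := (atTop ×ˢ atTop : Filter (ℕ × ℕ))) (g := mid) (w := w) (M := M + M)
    (fun p => ((mem_X_iff H hN hβm).1 (hmX p)).1) hwm (fun p => hLq _ (hmX p)) (hLq _ hw)
    (fun p => hd _ (hmX p))
    (fun p => (mid_int HF (hLq _ (hU p.1)) (hLq _ (hU p.2)) (hLq _ (hmX p))).trans
      (add_le_add (hM _) (hM _)))
    (by
      have h1 := hUw.comp (tendsto_fst (f := (atTop : Filter ℕ)) (g := (atTop : Filter ℕ)))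
      have h2 := hUw.comp (tendsto_snd (f := (atTop : Filter ℕ)) (g := (atTop : Filter ℕ)))
      have h3 := h1.add h2
      rw [add_zero] at h3
      refine squeeze_zero (fun p => integral_nonneg fun x => by positivity) (fun p => ?_) h3
      have he : ∀ x, mid p x - w x = (1/2) * (U p.1 x - w x) + (1/2) * (U p.2 x - w x) := by
        intro x; simp only [hmid]; ring
      have h4 := hd _ (hmX p)
      simp only [he] at h4 ⊢
      exact mid_int HF (u := fun x => U p.1 x - w x) (v := fun x => U p.2 x - w x)
        (hd _ (hU p.1)) (hd _ (hU p.2)) h4)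
  have h1 := hI.comp (tendsto_fst (f := (atTop : Filter ℕ)) (g := (atTop : Filter ℕ)))
  have h2 := hI.comp (tendsto_snd (f := (atTop : Filter ℕ)) (g := (atTop : Filter ℕ)))
  have h3 := ((h1.add h2).div_const 2).sub ((hGm.const_mul lam).const_add m)
  have h0 : (m + lam * G + (m + lam * G)) / 2 - (m + lam * ∫ x in Ω, Ff f x (w x)) = 0 := by
    rw [← hGd]; ring
  rw [h0] at h3
  refine squeeze_zero (fun p => ENNReal.toReal_nonneg) (fun p => ?_) h3
  have h5 := Imod_clarkson (s := s) (Ω := Ω) (β := β) H (hX p.1).1 (hX p.2).1 (hX p.1).2 (hX p.2).2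
  have h6 := hm _ (hmX p)
  rw [Jlam_eq H hN hβm (hmX p)] at h6
  simp only [Function.comp]
  simp only [hmid] at h6 ⊢
  linarith

lemma limit_part (hN : 1 ≤ N) (H : HypA a φm φp) (hβm : Measurable β) (HF : HypF Ω q qp f c₁ c₂)
    (hΩne : Ω.Nonempty)
    (hLq : ∀ u ∈ XsetM a s Ω β, IntegrableOn (fun x => |u x| ^ q x) Ω)
    {U : ℕ → Eucl N → ℝ} (hU : ∀ k, U k ∈ XsetM a s Ω β)
    {w : Eucl N → ℝ} (hw : w ∈ XsetM a s Ω β)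
    (hUw : Tendsto (fun k => ∫ x in Ω, |U k x - w x| ^ q x) atTop (nhds 0)) {L : ℝ}
    (hI : Tendsto (fun k => (Imod a s Ω β (U k)).toReal) atTop (nhds L))
    (hD : Tendsto (fun p : ℕ × ℕ =>
      (Imod a s Ω β (fun x => (1/2) * U p.1 x + (-1/2) * U p.2 x)).toReal)
      (atTop ×ˢ atTop) (nhds 0)) :
    ∃ u ∈ XsetM a s Ω β, (Imod a s Ω β u).toReal ≤ L ∧ u =ᵐ[volume.restrict Ω] w := by
  have hX : ∀ k, Measurable (U k) ∧ Imod a s Ω β (U k) < ⊤ := fun k => (mem_X_iff H hN hβm).1 (hU k)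
  have hwm := ((mem_X_iff H hN hβm).1 hw).1
  have hL0 : 0 ≤ L := ge_of_tendsto' hI fun k => ENNReal.toReal_nonneg
  have hev : ∀ i : ℕ, ∀ᶠ n in atTop, ∀ j ≥ n, ∀ k ≥ n,
      (Imod a s Ω β (fun x => (1/2) * U j x + (-1/2) * U k x)).toReal
        < ((2:ℝ) ^ i) ^ (-φp) * (1/2) ^ i := by
    intro i
    have h1 := hD.eventually (gt_mem_nhds (show (0:ℝ) < ((2:ℝ) ^ i) ^ (-φp) * (1/2) ^ i by positivity))
    rw [prod_atTop_atTop_eq, eventually_atTop] at h1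
    obtain ⟨⟨n1, n2⟩, h⟩ := h1
    filter_upwards [eventually_ge_atTop (max n1 n2)] with n hn j hj k hk
    exact h (j, k) ⟨(le_max_left _ _).trans (hn.trans hj), (le_max_right _ _).trans (hn.trans hk)⟩
  obtain ⟨ψ, hψ, hψp⟩ := extraction_forall_of_eventually hev
  set V : ℕ → Eucl N → ℝ := fun i => U (ψ i) with hV
  have hVm : ∀ i, Measurable (V i) := fun i => (hX _).1
  have hVI : ∀ i, Imod a s Ω β (fun x => (1/2) * V i x + (-1/2) * V (i+1) x) ≤
      ENNReal.ofReal (((2:ℝ) ^ i) ^ (-φp) * (1/2) ^ i) := by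
    intro i
    have h1 := hψp i (ψ i) le_rfl (ψ (i+1)) (hψ (Nat.lt_succ_self i)).le
    have h2 := ((mem_X_iff H hN hβm).1 (X_lin H hN hβm (hU (ψ i)) (hU (ψ (i+1))) (1/2) (-1/2))).2
    rw [← ENNReal.ofReal_toReal h2.ne]
    exact ENNReal.ofReal_le_ofReal h1.le
  have hae := ae_conv' hN HF.hΩo hΩne (ae_conv H hVm hVI)
  obtain ⟨u, hum, hu⟩ := measurable_limit_of_tendsto_metrizable_ae (fun i => (hVm i).aemeasurable) hae
  have hMu := Mu_tendsto (s := s) (β := β) HF.hΩo hu hVm hum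
  have hIu : Imod a s Ω β u ≤ ENNReal.ofReal L := by
    unfold Imod
    refine fatou_lim (g := fun i p => ENNReal.ofReal (PhiF a p.1 p.2 (Tu s (V i) p)))
      (fun i => (H.PhiT_meas (Tu_meas s (hVm i))).ennreal_ofReal.aemeasurable) ?_ ?_
    · filter_upwards [hMu] with p hp
      exact (ENNReal.continuous_ofReal.tendsto _).comp (((H.Phi_cont p.1 p.2).tendsto _).comp hp)
    · have h1 := (ENNReal.continuous_ofReal.tendsto _).comp (hI.comp hψ.tendsto_atTop)
      refine h1.congr fun i => ?_
      simp only [Function.comp]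
      rw [ENNReal.ofReal_toReal (hX _).2.ne]
      rfl
  refine ⟨u, (mem_X_iff H hN hβm).2 ⟨hum, hIu.trans_lt ENNReal.ofReal_lt_top⟩,
    ENNReal.toReal_le_of_le_ofReal hL0 hIu, ?_⟩
  have hd : ∀ u ∈ XsetM a s Ω β, IntegrableOn (fun x => |u x - w x| ^ q x) Ω := by
    intro u hu
    have := hLq _ (X_lin H hN hβm hu hw 1 (-1))
    refine this.congr_fun (fun x _ => ?_) HF.hΩo.measurableSet
    simp only []
    congr 2
    ring
  have hz : ∫⁻ x in Ω, ENNReal.ofReal (|u x - w x| ^ q x) ≤ 0 := by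
    refine fatou_lim (g := fun i x => ENNReal.ofReal (|V i x - w x| ^ q x)) (fun i => ?_) ?_ ?_
    · exact (HF.pow_meas ((hVm i).sub hwm)).aemeasurable.ennreal_ofReal
    · filter_upwards [ae_restrict_of_ae hu, HF.aeΩ] with x hx hxΩ
      have hq := HF.hq1 x hxΩ
      exact (ENNReal.continuous_ofReal.tendsto _).comp
        (((hx.sub_const (w x)).abs).rpow_const (Or.inr (by linarith)))
    · have h1 := (ENNReal.continuous_ofReal.tendsto _).comp (hUw.comp hψ.tendsto_atTop)
      rw [ENNReal.ofReal_zero] at h1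
      refine h1.congr fun i => ?_
      simp only [Function.comp]
      rw [ofReal_integral_eq_lintegral_ofReal (hd _ (hU _)) (ae_of_all _ fun x => by positivity)]
  have hz' := (lintegral_eq_zero_iff' (HF.pow_meas (hum.sub hwm)).aemeasurable.ennreal_ofReal).1
    (le_antisymm hz bot_le)
  filter_upwards [hz', HF.aeΩ] with x hx hxΩ
  have hq := HF.hq1 x hxΩ
  simp only [Pi.zero_apply, ENNReal.ofReal_eq_zero, Pi.sub_apply] at hx
  have h0 := le_antisymm hx (by positivity)
  rw [Real.rpow_eq_zero (abs_nonneg _) (by linarith), abs_eq_zero] at h0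
  linarith

lemma exists_min (hN : 1 ≤ N) (H : HypA a φm φp) (hβm : Measurable β) (HF : HypF Ω q qp f c₁ c₂)
    (hΩne : Ω.Nonempty) (hqpφ : qp < φm) {c : ℝ} (hc : 0 < c)
    (hemb : ∀ u ∈ XsetM a s Ω β, normq Ω q u ≤ ENNReal.ofReal c * normM a s Ω β u)
    (hLq : ∀ u ∈ XsetM a s Ω β, IntegrableOn (fun x => |u x| ^ q x) Ω)
    (hcpt : ∀ un : ℕ → Eucl N → ℝ, (∀ n, un n ∈ XsetM a s Ω β) →
      (∃ B : ℝ, ∀ n, normM a s Ω β (un n) ≤ ENNReal.ofReal B) →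
      ∃ ns : ℕ → ℕ, StrictMono ns ∧ ∃ w ∈ XsetM a s Ω β,
        Tendsto (fun k => ∫ x in Ω, |un (ns k) x - w x| ^ q x) atTop (nhds 0))
    (hne : (XsetM a s Ω β).Nonempty) {lam : ℝ} (hlam : 0 < lam) :
    ∃ u ∈ XsetM a s Ω β, ∀ v ∈ XsetM a s Ω β, Jlam a s Ω β f lam u ≤ Jlam a s Ω β f lam v := by
  obtain ⟨C₀, hC₀⟩ := coercive hN H hβm HF hqpφ hc hemb hlam
  set S := Jlam a s Ω β f lam '' XsetM a s Ω β with hS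
  have hbd : BddBelow S := by
    refine ⟨-C₀, ?_⟩
    rintro _ ⟨u, hu, rfl⟩
    have := hC₀ u hu
    have h0 : 0 ≤ (Imod a s Ω β u).toReal := ENNReal.toReal_nonneg
    linarith
  set m := sInf S with hmd
  have hm : ∀ u ∈ XsetM a s Ω β, m ≤ Jlam a s Ω β f lam u := fun u hu => csInf_le hbd ⟨u, hu, rfl⟩
  obtain ⟨t, -, ht, htS⟩ := exists_seq_tendsto_sInf (hne.image _) hbd
  choose un hunX hunt using htS
  obtain ⟨B, hB⟩ := ht.bddAbove_range
  have hIb : ∀ n, (Imod a s Ω β (un n)).toReal ≤ 2 * (B + C₀) := by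
    intro n
    have h1 := hC₀ _ (hunX n)
    have h2 : t n ≤ B := hB ⟨n, rfl⟩
    rw [hunt] at h1
    linarith
  set K := max 1 (2 * (2 * (B + C₀))) with hK
  have hK1 : 1 ≤ K := le_max_left _ _
  have hIK : ∀ n, 2 * (Imod a s Ω β (un n)).toReal ≤ K := fun n =>
    (by linarith [hIb n] : _ ≤ 2 * (2 * (B + C₀))).trans (le_max_right _ _)
  obtain ⟨ns, hns, w, hw, hUw⟩ := hcpt un hunX ⟨K ^ (1 / φm), fun n => by
    obtain ⟨h1, h2⟩ := (mem_X_iff H hN hβm).1 (hunX n)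
    refine norm_bound H hN hβm h1 hK1 ?_
    rw [← ENNReal.ofReal_toReal h2.ne, ← ENNReal.ofReal_mul (by norm_num)]
    exact ENNReal.ofReal_le_ofReal (hIK n)⟩
  have hJ : Tendsto (fun k => Jlam a s Ω β f lam (un (ns k))) atTop (nhds m) := by
    refine (ht.comp hns.tendsto_atTop).congr fun k => ?_
    simp only [Function.comp, hunt]
  obtain ⟨hI, hD⟩ := cauchy_part hN H hβm HF hLq hm (U := fun k => un (ns k)) (fun k => hunX _) hJ
    (fun k => (Lq_bound hN H hβm HF hc hemb (hunX (ns k)) hK1 (hIK _)).2) hw hUw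
  obtain ⟨u, hu, hIu, hae⟩ := limit_part hN H hβm HF hΩne hLq (U := fun k => un (ns k))
    (fun k => hunX _) hw hUw hI hD
  refine ⟨u, hu, fun v hv => le_trans ?_ (hm v hv)⟩
  rw [Jlam_eq H hN hβm hu]
  have : ∫ x in Ω, Ff f x (u x) = ∫ x in Ω, Ff f x (w x) :=
    integral_congr_ae (by filter_upwards [hae] with x hx; rw [hx])
  rw [this]
  linarith

end Exist


/-- existence of a nontrivial weak solution of the Neumann–Robin problem
for every small `λ > 0`. -/
theorem statement14
    (N : ℕ) (hN : 1 ≤ N)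
    (Ω : Set (Eucl N)) (hΩo : IsOpen Ω) (hΩb : Bornology.IsBounded Ω) (hΩne : Ω.Nonempty)
    (s : ℝ) (hs : s ∈ Set.Ioo (0:ℝ) 1)
    (a : Eucl N → Eucl N → ℝ → ℝ)
    (ha : Measurable fun p : Eucl N × Eucl N × ℝ => a p.1 p.2.1 p.2.2)
    (hmono : ∀ x y, StrictMono (phiF a x y))
    (hcont : ∀ x y, Continuous (phiF a x y))
    (hsurj : ∀ x y, Function.Surjective (phiF a x y))
    (β : Eucl N → ℝ) (hβm : Measurable β)
    (hβb : ∃ C : ℝ, ∀ᵐ x ∂(volume.restrict Ωᶜ), |β x| ≤ C)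
    (hβ0 : ∀ᵐ x ∂(volume.restrict Ωᶜ), 0 ≤ β x)
    (φm φp : ℝ) (hφm : 1 < φm) (hφmp : φm ≤ φp)
    (hΦ1 : ∀ x y t, 0 < t →
      φm ≤ t * phiF a x y t / PhiF a x y t ∧ t * phiF a x y t / PhiF a x y t ≤ φp)
    (hΦ2 : ∀ x y : Eucl N, ConvexOn ℝ (Set.Ici 0) fun t => PhiF a x y (Real.sqrt t))
    (hΦ3 : ∃ C : ℝ, ∀ x y : Eucl N, PhiF a x y 1 ≤ C)
    (hsym : ∀ x y t, a x y t = a y x t)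
    (q : Eucl N → ℝ) (hqc : ContinuousOn q (closure Ω)) (hq1 : ∀ x ∈ closure Ω, 1 < q x)
    (qp : ℝ) (hqp_le : ∀ x ∈ closure Ω, q x ≤ qp)
    (f : Eucl N → ℝ → ℝ)
    (hfmeas : ∀ t : ℝ, Measurable fun x => f x t)
    (hfcont : ∀ x : Eucl N, Continuous fun t => f x t)
    (c₁ c₂ : ℝ) (hc₁ : 0 < c₁) (hc₂ : 0 < c₂)
    (hf1 : ∀ x ∈ Ω, ∀ t : ℝ, |f x t| ≤ c₁ * |t| ^ (q x - 1))
    (hf2 : ∀ x ∈ Ω, ∀ t : ℝ, c₂ * |t| ^ q x ≤ Ff f x t)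
    (hqpφ : qp < φm)
    (c : ℝ) (hc : 0 < c)
    (hemb : ∀ u ∈ XsetM a s Ω β, normq Ω q u ≤ ENNReal.ofReal c * normM a s Ω β u)
    (hcpt : ∀ un : ℕ → Eucl N → ℝ, (∀ n, un n ∈ XsetM a s Ω β) →
      (∃ B : ℝ, ∀ n, normM a s Ω β (un n) ≤ ENNReal.ofReal B) →
      ∃ ns : ℕ → ℕ, StrictMono ns ∧ ∃ w ∈ XsetM a s Ω β,
        Tendsto (fun k => ∫ x in Ω, |un (ns k) x - w x| ^ q x) atTop (nhds 0)) :
    ∃ lamstar : ℝ, 0 < lamstar ∧ ∀ lam : ℝ, 0 < lam → lam < lamstar →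
      ∃ u ∈ XsetM a s Ω β, ¬ (u =ᵐ[volume] (fun _ => (0:ℝ))) ∧
        Jlam a s Ω β f lam u < 0 ∧
        ∀ v ∈ XsetM a s Ω β, Aform a s Ω β u v = lam * ∫ x in Ω, f x (u x) * v x := by
  have H : HypA a φm φp := ⟨ha, hmono, hcont, hφm, hφmp, hΦ1, hΦ2, hΦ3⟩
  have hqp1 : 1 < qp := by
    obtain ⟨x, hx⟩ := hΩne
    exact (hq1 x (subset_closure hx)).trans_le (hqp_le x (subset_closure hx))
  have HF : HypF Ω q qp f c₁ c₂ :=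
    ⟨hΩo, (hqc.mono subset_closure).aemeasurable hΩo.measurableSet,
      fun x hx => hq1 x (subset_closure hx), fun x hx => hqp_le x (subset_closure hx), hqp1,
      hfmeas, hfcont, hc₁, hc₂, hf1, hf2⟩
  have hLq : ∀ u ∈ XsetM a s Ω β, IntegrableOn (fun x => |u x| ^ q x) Ω := fun u hu =>
    (Lq_bound hN H hβm HF hc hemb hu (le_max_left 1 _) (le_max_right _ _)).1
  refine ⟨1, one_pos, fun lam hlam _ => ?_⟩
  obtain ⟨v, hv, hJv⟩ := exists_neg hN H hβm HF hΩb hΩne hs hqpφ hLq hlam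
  obtain ⟨u, hu, hmin⟩ := exists_min hN H hβm HF hΩne hqpφ hc hemb hLq hcpt ⟨v, hv⟩ hlam
  have hneg : Jlam a s Ω β f lam u < 0 := (hmin v hv).trans_lt hJv
  refine ⟨u, hu, fun h0 => ?_, hneg, fun w hw => euler_lagrange hN H hβm hβ0 HF hLq hu hmin hw⟩
  rw [Jlam_eq H hN hβm hu] at hneg
  have h1 : ∫ x in Ω, Ff f x (u x) = 0 := by
    rw [← integral_zero (Eucl N) ℝ (μ := volume.restrict Ω)]
    refine integral_congr_ae ?_
    filter_upwards [ae_restrict_of_ae h0] with x hx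
    rw [hx]
    simp [Ff]
  rw [h1, mul_zero, sub_zero] at hneg
  exact absurd hneg (not_lt.2 ENNReal.toReal_nonneg)
end
end
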